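/- (Main theorem: the simplicial complex Δ_{C_n,2} is pure of dimension 2(n−1) and a weak pseudomanifold.) Let n ≥ 1 and let T be an n-periodic 2-triangulation on ℤ. Then: (1) T contains exactly 2(n−1) orbits of 2-relevant edges under translation by n; and (2) for every 2-relevant edge e ∈ T with translation orbit ẽ = {e + tn : t ∈ ℤ}, there are exactly two n-periodic 2-triangulations on ℤ containing T ∖ ẽ (one of which is T itself). -/

import Mathlib

/- Edges on the universal cover of the half-cylinder, modeled by the integers.
   An edge is an unordered pair of distinct integers, represented as an ordered
   pair `(a, b)` with `a < b` (validity). -/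

namespace Multitriangulation

abbrev Edge := ℤ × ℤ

/-- Translate an edge by `t`: `[a,b] + t = [a+t, b+t]`. -/
def shift (e : Edge) (t : ℤ) : Edge := (e.1 + t, e.2 + t)

/-- Two edges (as unordered pairs of integers) cross:
their endpoints strictly interleave. -/
def Crosses (e f : Edge) : Prop :=
  (min e.1 e.2 < min f.1 f.2 ∧ min f.1 f.2 < max e.1 e.2 ∧ max e.1 e.2 < max f.1 f.2) ∨
  (min f.1 f.2 < min e.1 e.2 ∧ min e.1 e.2 < max f.1 f.2 ∧ max f.1 f.2 < max e.1 e.2)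

/-- A finite set of edges is an `l`-crossing if it consists of `l` pairwise
crossing edges. -/
def IsCrossing (l : ℕ) (S : Finset Edge) : Prop :=
  S.card = l ∧ ∀ e ∈ S, ∀ f ∈ S, e ≠ f → Crosses e f

/-- A set of edges is `l`-crossing-free if no `l` of its edges pairwise cross. -/
def CrossingFree (l : ℕ) (E : Set Edge) : Prop :=
  ¬ ∃ S : Finset Edge, ↑S ⊆ E ∧ IsCrossing l S

/-- A set of edges is `n`-periodic if `e ∈ E ↔ e + n ∈ E`. -/
def Periodic (n : ℕ) (E : Set Edge) : Prop := ∀ e, e ∈ E ↔ shift e (n : ℤ) ∈ E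

/-- All members are genuine edges `[a,b]` with `a < b`. -/
def ValidEdges (E : Set Edge) : Prop := ∀ e ∈ E, e.1 < e.2

/-- An `n`-periodic `k`-triangulation on `ℤ`: an `n`-periodic
`(k+1)`-crossing-free set of edges that is maximal under inclusion among
`n`-periodic `(k+1)`-crossing-free sets of edges. -/
def IsTriangulation (n k : ℕ) (T : Set Edge) : Prop :=
  ValidEdges T ∧ Periodic n T ∧ CrossingFree (k+1) T ∧
  ∀ T', ValidEdges T' → Periodic n T' → CrossingFree (k+1) T' → T ⊆ T' → T' = T

/-- The orbit of an edge under translation by multiples of `n`. -/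
def orbitOf (n : ℕ) (e : Edge) : Set Edge := {f | ∃ t : ℤ, f = shift e (t * n)}

/-!
Call a set of edges that satisfies all hypotheses except maximality admissible. In a triangulation,
every vertex `b` without the loop `(b, b + 2n)` is the middle of exactly one star (a pentagram of
edges): its long edges are the shortest pair of crossing edges passing over `b`. Conversely, every
2-relevant edge is a long edge of exactly one star. Exactly one vertex modulo `n` carries a loop, so
modulo `n` there are `n - 1` stars, contributing two long edges each.

An edge `e = (u, v)` that is not a loop is a long edge of one star `S` and a short edge of another
star `R`. Replacing the orbit of `e` by that of the common bisector of `R` and `S` creates no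
3-crossing, because an edge pair blocking the bisector would already block an edge of `R` or `S`; a
loop is replaced by the loop at the middle of `S`. For uniqueness, all triangulations have equally
many relevant orbits, so another triangulation that contains `T` without the orbit of `e` differs
from `T` by the exchange of one orbit. The new edge bisects a star of `T` at each of its ends. Each
of these two stars must contain a translate of `e`, for otherwise its edges would still block the
new edge, and this leaves only the common bisector.
-/

theorem exists_least_mem_Ioc {P : ℤ → Prop} {a b : ℤ} (hab : a < b) (hb : P b) :
    ∃ m, a < m ∧ m ≤ b ∧ P m ∧ ∀ z, a < z → z < m → ¬ P z := by
  obtain ⟨m, ⟨ham, hm⟩, hmin⟩ := Int.exists_least_of_bdd (P := fun z => a < z ∧ P z)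
    ⟨a, fun z hz => hz.1.le⟩ ⟨b, hab, hb⟩
  exact ⟨m, ham, hmin b ⟨hab, hb⟩, hm, fun z haz hzm hz => (hmin z ⟨haz, hz⟩).not_gt hzm⟩

theorem exists_greatest_mem_Ico {P : ℤ → Prop} {a b : ℤ} (hab : a < b) (ha : P a) :
    ∃ m, a ≤ m ∧ m < b ∧ P m ∧ ∀ z, m < z → z < b → ¬ P z := by
  obtain ⟨m, ⟨hmb, hm⟩, hmax⟩ := Int.exists_greatest_of_bdd (P := fun z => z < b ∧ P z)
    ⟨b, fun z hz => hz.1.le⟩ ⟨a, hab, ha⟩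
  exact ⟨m, hmax a ⟨hab, ha⟩, hmb, hm, fun z hmz hzb hz => (hmax z ⟨hzb, hz⟩).not_gt hmz⟩

section Orbits

variable {n : ℕ}

theorem mem_orbitOf {p q x y : ℤ} :
    (p, q) ∈ orbitOf n (x, y) ↔ ∃ t : ℤ, p = x + t * n ∧ q = y + t * n := by
  simp [orbitOf, shift]

theorem mem_orbitOf_self (e : Edge) : e ∈ orbitOf n e := ⟨0, by simp [shift]⟩

theorem orbitOf_eq_iff {e f : Edge} : orbitOf n e = orbitOf n f ↔ f ∈ orbitOf n e := by
  refine ⟨fun h => h ▸ mem_orbitOf_self f, ?_⟩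
  rintro ⟨t, rfl⟩
  ext g
  constructor
  · rintro ⟨s, rfl⟩
    exact ⟨s - t, by simp only [shift, Prod.mk.injEq]; constructor <;> ring⟩
  · rintro ⟨s, rfl⟩
    exact ⟨s + t, by simp only [shift, Prod.mk.injEq]; constructor <;> ring⟩

theorem orbitOf_add_mul {x y : ℤ} (t : ℤ) : orbitOf n (x + t * n, y + t * n) = orbitOf n (x, y) :=
  (orbitOf_eq_iff.2 (mem_orbitOf.2 ⟨t, rfl, rfl⟩)).symm

theorem mem_orbitOf_comm {e f : Edge} : e ∈ orbitOf n f ↔ f ∈ orbitOf n e := by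
  rw [← orbitOf_eq_iff, eq_comm, orbitOf_eq_iff]

theorem add_mem_orbitOf {p q : ℤ} {e : Edge} (h : (p, q) ∈ orbitOf n e) :
    (p + n, q + n) ∈ orbitOf n e := by
  obtain ⟨t, ht⟩ := mem_orbitOf.1 h
  exact mem_orbitOf.2 ⟨t + 1, by rw [ht.1]; ring, by rw [ht.2]; ring⟩

theorem sub_mem_orbitOf {p q : ℤ} {e : Edge} (h : (p, q) ∈ orbitOf n e) :
    (p - n, q - n) ∈ orbitOf n e := by
  obtain ⟨t, ht⟩ := mem_orbitOf.1 h
  exact mem_orbitOf.2 ⟨t - 1, by rw [ht.1]; ring, by rw [ht.2]; ring⟩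

theorem sub_eq_sub_of_mem_orbitOf {p q x y : ℤ} (h : (p, q) ∈ orbitOf n (x, y)) :
    q - p = y - x := by
  obtain ⟨t, rfl, rfl⟩ := mem_orbitOf.1 h
  ring

end Orbits

section Admissible

variable {n : ℕ} {E : Set Edge} {x y : ℤ}

/-- An `n`-periodic 3-crossing-free set of edges, for `n ≥ 2`. Crossing-freeness is stated for
linearly ordered triples of edges, see `crossingFree_three_iff`. -/
structure Admissible (n : ℕ) (E : Set Edge) : Prop where
  two_le : 2 ≤ n
  lt_of_mem : ∀ {x y}, (x, y) ∈ E → x < y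
  add_mem : ∀ {x y}, (x, y) ∈ E → (x + n, y + n) ∈ E
  sub_mem : ∀ {x y}, (x, y) ∈ E → (x - n, y - n) ∈ E
  no_crossing : ∀ {x₁ y₁ x₂ y₂ x₃ y₃}, (x₁, y₁) ∈ E → (x₂, y₂) ∈ E → (x₃, y₃) ∈ E →
    ¬(x₁ < x₂ ∧ x₂ < x₃ ∧ x₃ < y₁ ∧ y₁ < y₂ ∧ y₂ < y₃)

theorem crosses_iff {e f : Edge} (he : e.1 < e.2) (hf : f.1 < f.2) : Crosses e f ↔
    (e.1 < f.1 ∧ f.1 < e.2 ∧ e.2 < f.2) ∨ (f.1 < e.1 ∧ e.1 < f.2 ∧ f.2 < e.2) := by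
  unfold Crosses
  rw [min_eq_left he.le, max_eq_right he.le, min_eq_left hf.le, max_eq_right hf.le]

theorem crossingFree_three_iff (hE : ValidEdges E) : CrossingFree 3 E ↔
    ∀ {x₁ y₁ x₂ y₂ x₃ y₃ : ℤ}, (x₁, y₁) ∈ E → (x₂, y₂) ∈ E → (x₃, y₃) ∈ E →
      ¬(x₁ < x₂ ∧ x₂ < x₃ ∧ x₃ < y₁ ∧ y₁ < y₂ ∧ y₂ < y₃) := by
  constructor
  · intro hfree x₁ y₁ x₂ y₂ x₃ y₃ h₁ h₂ h₃ hlt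
    refine hfree ⟨{(x₁, y₁), (x₂, y₂), (x₃, y₃)}, by simp [Set.insert_subset_iff, *], ?_, ?_⟩
    · rw [Finset.card_eq_three]
      exact ⟨_, _, _, by grind, by grind, by grind, rfl⟩
    · intro e he f hf hne
      have hcr := crosses_iff (e := e) (f := f)
      simp only [Finset.mem_insert, Finset.mem_singleton] at he hf
      rcases he with rfl | rfl | rfl <;> rcases hf with rfl | rfl | rfl <;>
        first | exact (hne rfl).elim | exact (hcr (by grind) (by grind)).2 (by grind)
  · rintro hfree ⟨S, hS, hcard, hcross⟩
    obtain ⟨⟨a, a'⟩, ⟨b, b'⟩, ⟨c, c'⟩, hab, hac, hbc, rfl⟩ := Finset.card_eq_three.1 hcard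
    have ha : (a, a') ∈ E := hS (by simp)
    have hb : (b, b') ∈ E := hS (by simp)
    have hc : (c, c') ∈ E := hS (by simp)
    have habx := (crosses_iff (hE _ ha) (hE _ hb)).1 (hcross _ (by simp) _ (by simp) hab)
    have hacx := (crosses_iff (hE _ ha) (hE _ hc)).1 (hcross _ (by simp) _ (by simp) hac)
    have hbcx := (crosses_iff (hE _ hb) (hE _ hc)).1 (hcross _ (by simp) _ (by simp) hbc)
    rcases lt_or_ge a b with _ | _ <;> rcases lt_or_ge a c with _ | _ <;>
      rcases lt_or_ge b c with _ | _ <;>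
    first
    | omega
    | exact hfree ha hb hc (by omega)
    | exact hfree ha hc hb (by omega)
    | exact hfree hb ha hc (by omega)
    | exact hfree hb hc ha (by omega)
    | exact hfree hc ha hb (by omega)
    | exact hfree hc hb ha (by omega)

theorem admissible_iff (hn : 2 ≤ n) :
    Admissible n E ↔ ValidEdges E ∧ Periodic n E ∧ CrossingFree 3 E := by
  constructor
  · intro h
    have hE : ValidEdges E := fun e he => h.lt_of_mem he
    refine ⟨hE, fun e => ⟨h.add_mem, fun he => ?_⟩, (crossingFree_three_iff hE).2 h.no_crossing⟩
    simpa [shift] using h.sub_mem he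
  · rintro ⟨hE, hper, hfree⟩
    refine ⟨hn, fun h => hE _ h, fun h => (hper _).1 h, fun {x y} h => ?_,
      (crossingFree_three_iff hE).1 hfree⟩
    exact (hper (x - n, y - n)).2 (by simpa [shift] using h)

namespace Admissible

theorem mono {F : Set Edge} (hF : Admissible n F) (hEF : E ⊆ F)
    (hadd : ∀ {x y}, (x, y) ∈ E → (x + n, y + n) ∈ E)
    (hsub : ∀ {x y}, (x, y) ∈ E → (x - n, y - n) ∈ E) : Admissible n E where
  two_le := hF.two_le
  lt_of_mem h := hF.lt_of_mem (hEF h)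
  add_mem := hadd
  sub_mem := hsub
  no_crossing h₁ h₂ h₃ := hF.no_crossing (hEF h₁) (hEF h₂) (hEF h₃)

theorem add_mul_mem (h : Admissible n E) (hxy : (x, y) ∈ E) (t : ℤ) :
    (x + t * n, y + t * n) ∈ E := by
  induction t using Int.induction_on with
  | zero => simpa using hxy
  | succ i ih => convert h.add_mem ih using 2 <;> ring
  | pred i ih => convert h.sub_mem ih using 2 <;> ring

theorem orbitOf_subset (h : Admissible n E) (hxy : (x, y) ∈ E) : orbitOf n (x, y) ⊆ E := by
  rintro _ ⟨t, rfl⟩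
  exact h.add_mul_mem hxy t

theorem sub_mul_mem (h : Admissible n E) (hxy : (x, y) ∈ E) (t : ℤ) :
    (x - t * n, y - t * n) ∈ E := by
  convert h.add_mul_mem hxy (-t) using 2 <;> ring

theorem le_add_of_mem (h : Admissible n E) (hxy : (x, y) ∈ E) : y ≤ x + 2 * n := by
  by_contra hlong
  have := h.two_le
  exact h.no_crossing hxy (h.add_mem hxy) (h.add_mem (h.add_mem hxy)) (by omega)

end Admissible

/-- The edge `(x, y)` forms a 3-crossing with two crossing edges of `E`. -/
def BlockedByPair (E : Set Edge) (x y : ℤ) : Prop :=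
  ∃ p q r s, (p, q) ∈ E ∧ (r, s) ∈ E ∧ p < r ∧ r < q ∧ q < s ∧
    ((x < p ∧ r < y ∧ y < q) ∨ (p < x ∧ x < r ∧ q < y ∧ y < s) ∨ (r < x ∧ x < q ∧ s < y))

/-- The edge `(x, y)` forms a 3-crossing with its translate `(x + n, y + n)` and an edge `(p, q)`
of `E`. The condition `q ≤ p + n` excludes the situation where `(p, q)` and a translate of
`(p, q)` already block `(x, y)` in the sense of `BlockedByPair`. -/
def BlockedByTranslate (n : ℕ) (E : Set Edge) (x y : ℤ) : Prop :=
  ∃ p q, (p, q) ∈ E ∧ x < p ∧ p < x + n ∧ x + n < y ∧ y < q ∧ q < y + n ∧ q ≤ p + n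

/-- Adding the orbit of `(x, y)` to `E` creates a 3-crossing; see `Admissible.union_orbitOf`. -/
def Blocked (n : ℕ) (E : Set Edge) (x y : ℤ) : Prop :=
  BlockedByPair E x y ∨ BlockedByTranslate n E x y

theorem translates_no_crossing (hle : y ≤ x + 2 * n) (t₁ t₂ t₃ : ℤ) :
    ¬(x + t₁ * n < x + t₂ * n ∧ x + t₂ * n < x + t₃ * n ∧ x + t₃ * n < y + t₁ * n) := by
  rintro ⟨h₁₂, h₂₃, h₃₁⟩
  have h₁₂' : t₁ < t₂ := lt_of_mul_lt_mul_right (by omega) (Int.natCast_nonneg n)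
  have h₂₃' : t₂ < t₃ := lt_of_mul_lt_mul_right (by omega) (Int.natCast_nonneg n)
  have : (t₁ + 2) * n ≤ t₃ * n := by gcongr; omega
  have : (t₁ + 2) * n = t₁ * n + 2 * n := by ring
  omega

namespace Admissible

theorem blockedByPair_of_translate (h : Admissible n E) {p q r s : ℤ} (t : ℤ) (hpq : (p, q) ∈ E)
    (hrs : (r, s) ∈ E) (hcross : p < r ∧ r < q ∧ q < s ∧
      ((x + t * n < p ∧ r < y + t * n ∧ y + t * n < q) ∨
        (p < x + t * n ∧ x + t * n < r ∧ q < y + t * n ∧ y + t * n < s) ∨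
        (r < x + t * n ∧ x + t * n < q ∧ s < y + t * n))) : BlockedByPair E x y :=
  ⟨_, _, _, _, h.sub_mul_mem hpq t, h.sub_mul_mem hrs t, by omega⟩

theorem blocked_of_crosses_add (h : Admissible n E) (hle : y ≤ x + 2 * n) {p q : ℤ}
    (hpq : (p, q) ∈ E) (hcross : (p < x ∧ x + n < q ∧ q < y) ∨
      (x < p ∧ p < x + n ∧ x + n < y ∧ y < q ∧ q < y + n) ∨ (x + n < p ∧ p < y ∧ y + n < q)) :
    Blocked n E x y := by
  have := h.le_add_of_mem hpq
  have := h.two_le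
  rcases hcross with hfirst | hmiddle | hlast
  · exact .inl ⟨p, q, p + n, q + n, hpq, h.add_mem hpq, by omega⟩
  · by_cases hlen : q ≤ p + n
    · exact .inr ⟨p, q, hpq, by omega⟩
    · exact .inl ⟨p - n, q - n, p, q, h.sub_mem hpq, hpq, by omega⟩
  · exact .inl ⟨p - n, q - n, p, q, h.sub_mem hpq, hpq, by omega⟩

theorem blocked_of_crosses_translates (h : Admissible n E) (hle : y ≤ x + 2 * n) {p q t s : ℤ}
    (hpq : (p, q) ∈ E) (hts : x + t * n < x + s * n) (hst : x + s * n < y + t * n)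
    (hcross : (p < x + t * n ∧ x + s * n < q ∧ q < y + t * n) ∨
      (x + t * n < p ∧ p < x + s * n ∧ y + t * n < q ∧ q < y + s * n) ∨
      (x + s * n < p ∧ p < y + t * n ∧ y + s * n < q)) : Blocked n E x y := by
  have hlt : t < s := by
    by_contra hle
    have : s * n ≤ t * n := by gcongr; omega
    omega
  have hlt' : s < t + 2 := by
    by_contra hge
    have : (t + 2) * n ≤ s * n := by gcongr; omega
    have : (t + 2) * n = t * n + 2 * n := by ring
    omega
  obtain rfl : s = t + 1 := by omega
  rw [add_one_mul] at hcross hts hst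
  exact h.blocked_of_crosses_add hle (h.sub_mul_mem hpq t) (by omega)

theorem union_orbitOf (h : Admissible n E) (hxy : x < y) (hle : y ≤ x + 2 * n)
    (hblk : ¬ Blocked n E x y) : Admissible n (E ∪ orbitOf n (x, y)) where
  two_le := h.two_le
  lt_of_mem hpq := hpq.elim h.lt_of_mem fun ho => by
    have := sub_eq_sub_of_mem_orbitOf ho
    omega
  add_mem := Or.imp h.add_mem add_mem_orbitOf
  sub_mem := Or.imp h.sub_mem sub_mem_orbitOf
  no_crossing h₁ h₂ h₃ hlt := by
    simp only [Set.mem_union, mem_orbitOf] at h₁ h₂ h₃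
    rcases h₁ with h₁ | ⟨t₁, rfl, rfl⟩ <;> rcases h₂ with h₂ | ⟨t₂, rfl, rfl⟩ <;>
      rcases h₃ with h₃ | ⟨t₃, rfl, rfl⟩
    · exact h.no_crossing h₁ h₂ h₃ hlt
    · exact hblk (.inl (h.blockedByPair_of_translate t₃ h₁ h₂ (by omega)))
    · exact hblk (.inl (h.blockedByPair_of_translate t₂ h₁ h₃ (by omega)))
    · exact hblk (h.blocked_of_crosses_translates hle h₁ (t := t₂) (s := t₃)
        (by omega) (by omega) (by omega))
    · exact hblk (.inl (h.blockedByPair_of_translate t₁ h₂ h₃ (by omega)))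
    · exact hblk (h.blocked_of_crosses_translates hle h₂ (t := t₁) (s := t₃)
        (by omega) (by omega) (by omega))
    · exact hblk (h.blocked_of_crosses_translates hle h₃ (t := t₁) (s := t₂)
        (by omega) (by omega) (by omega))
    · exact translates_no_crossing hle t₁ t₂ t₃ (by omega)

end Admissible

/-- An admissible set of edges to which the orbit of no further edge can be added; these are the
2-triangulations, see `saturated_of_maximal`. -/
structure Saturated (n : ℕ) (E : Set Edge) : Prop extends Admissible n E where
  blocked : ∀ {x y : ℤ}, x < y → y ≤ x + 2 * n → (x, y) ∉ E → Blocked n E x y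

theorem isTriangulation_iff_maximal (hn : 2 ≤ n) :
    IsTriangulation n 2 E ↔ Maximal (Admissible n) E := by
  have hadm (F : Set Edge) := admissible_iff (E := F) hn
  constructor
  · rintro ⟨hv, hp, hc, hmax⟩
    refine ⟨(hadm E).2 ⟨hv, hp, hc⟩, fun F hF hEF => ?_⟩
    obtain ⟨hv', hp', hc'⟩ := (hadm F).1 hF
    exact (hmax F hv' hp' hc' hEF).subset
  · rintro ⟨hE, hmax⟩
    obtain ⟨hv, hp, hc⟩ := (hadm E).1 hE
    exact ⟨hv, hp, hc, fun F hv' hp' hc' hEF =>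
      (hmax ((hadm F).2 ⟨hv', hp', hc'⟩) hEF).antisymm hEF⟩

theorem saturated_of_maximal (hE : Maximal (Admissible n) E) : Saturated n E where
  toAdmissible := hE.prop
  blocked {x y} hxy hle hmem := by
    by_contra hblk
    have hsub := hE.le_of_ge (hE.prop.union_orbitOf hxy hle hblk) Set.subset_union_left
    exact hmem (hsub (.inr (mem_orbitOf_self _)))

namespace Saturated

theorem mem_of_length_le_two (h : Saturated n E) (hxy : x < y) (hle : y ≤ x + 2) :
    (x, y) ∈ E := by
  by_contra hmem
  have := h.two_le
  rcases h.blocked hxy (by omega) hmem with ⟨p, q, r, s, -, -, _⟩ | ⟨p, q, -, _⟩ <;> omega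

end Saturated

end Admissible

section Reflection

variable {n : ℕ} {E : Set Edge} {x y : ℤ}

/-- The image of `E` under the reflection `x ↦ -x` of the integers. It exchanges left and right,
which halves many arguments. -/
def reflect (E : Set Edge) : Set Edge := {e | (-e.2, -e.1) ∈ E}

theorem mem_reflect : (x, y) ∈ reflect E ↔ (-y, -x) ∈ E := Iff.rfl

theorem neg_mem_reflect : (-y, -x) ∈ reflect E ↔ (x, y) ∈ E := by simp [mem_reflect]

theorem reflect_reflect (E : Set Edge) : reflect (reflect E) = E := by
  ext
  simp [reflect]

theorem Admissible.reflect (h : Admissible n E) : Admissible n (reflect E) where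
  two_le := h.two_le
  lt_of_mem hxy := by
    have := h.lt_of_mem (mem_reflect.1 hxy)
    omega
  add_mem hxy := by
    have := h.sub_mem (mem_reflect.1 hxy)
    rw [mem_reflect]
    convert this using 2 <;> ring
  sub_mem hxy := by
    have := h.add_mem (mem_reflect.1 hxy)
    rw [mem_reflect]
    convert this using 2 <;> ring
  no_crossing h₁ h₂ h₃ hlt := h.no_crossing h₃ h₂ h₁ (by omega)

theorem BlockedByPair.reflect (h : BlockedByPair E x y) :
    BlockedByPair (reflect E) (-y) (-x) := by
  obtain ⟨p, q, r, s, hpq, hrs, _⟩ := h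
  exact ⟨-s, -r, -q, -p, neg_mem_reflect.2 hrs, neg_mem_reflect.2 hpq, by omega⟩

theorem BlockedByTranslate.reflect (hE : Admissible n E) (h : BlockedByTranslate n E x y) :
    BlockedByTranslate n (reflect E) (-y) (-x) := by
  obtain ⟨p, q, hpq, _⟩ := h
  exact ⟨_, _, hE.reflect.add_mem (neg_mem_reflect.2 hpq), by omega⟩

theorem Blocked.reflect (hE : Admissible n E) (h : Blocked n E x y) :
    Blocked n (reflect E) (-y) (-x) :=
  h.imp BlockedByPair.reflect (BlockedByTranslate.reflect hE)

theorem Saturated.reflect (h : Saturated n E) : Saturated n (reflect E) where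
  toAdmissible := h.toAdmissible.reflect
  blocked {x y} hxy hle hmem := by
    simpa using (h.blocked (x := -y) (y := -x) (by omega) (by omega) hmem).reflect h.toAdmissible

end Reflection

section Stars

/-- Five vertices spanning a star (a pentagram): `vᵢ` is joined to `vⱼ` unless `i` and `j` are
cyclically consecutive. The role of `v₂`, the *middle* of the star, is special: in a
triangulation the star is determined by it, see `IsStar.eq_of_middle`. -/
structure IsStar (E : Set Edge) (v₀ v₁ v₂ v₃ v₄ : ℤ) : Prop where
  ordered : v₀ < v₁ ∧ v₁ < v₂ ∧ v₂ < v₃ ∧ v₃ < v₄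
  mem₀₂ : (v₀, v₂) ∈ E
  mem₀₃ : (v₀, v₃) ∈ E
  mem₁₃ : (v₁, v₃) ∈ E
  mem₁₄ : (v₁, v₄) ∈ E
  mem₂₄ : (v₂, v₄) ∈ E

namespace IsStar

variable {n : ℕ} {E : Set Edge} {v₀ v₁ v₂ v₃ v₄ z : ℤ}

theorem notMem_angle₀ (S : IsStar E v₀ v₁ v₂ v₃ v₄) (h : Admissible n E) (h₂ : v₂ < z)
    (h₃ : z < v₃) : (v₀, z) ∉ E := fun hz =>
  h.no_crossing hz S.mem₁₃ S.mem₂₄ (by have := S.ordered; omega)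

theorem notMem_angle₁ (S : IsStar E v₀ v₁ v₂ v₃ v₄) (h : Admissible n E) (h₃ : v₃ < z)
    (h₄ : z < v₄) : (v₁, z) ∉ E := fun hz =>
  h.no_crossing S.mem₀₃ hz S.mem₂₄ (by have := S.ordered; omega)

theorem notMem_angle₂_left (S : IsStar E v₀ v₁ v₂ v₃ v₄) (h : Admissible n E) (h₀ : z < v₀) :
    (z, v₂) ∉ E := fun hz =>
  h.no_crossing hz S.mem₀₃ S.mem₁₄ (by have := S.ordered; omega)

theorem notMem_angle₂_right (S : IsStar E v₀ v₁ v₂ v₃ v₄) (h : Admissible n E) (h₄ : v₄ < z) :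
    (v₂, z) ∉ E := fun hz =>
  h.no_crossing S.mem₀₃ S.mem₁₄ hz (by have := S.ordered; omega)

theorem notMem_angle₃ (S : IsStar E v₀ v₁ v₂ v₃ v₄) (h : Admissible n E) (h₀ : v₀ < z)
    (h₁ : z < v₁) : (z, v₃) ∉ E := fun hz =>
  h.no_crossing S.mem₀₂ hz S.mem₁₄ (by have := S.ordered; omega)

theorem notMem_angle₄ (S : IsStar E v₀ v₁ v₂ v₃ v₄) (h : Admissible n E) (h₁ : v₁ < z)
    (h₂ : z < v₂) : (z, v₄) ∉ E := fun hz =>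
  h.no_crossing S.mem₀₂ S.mem₁₃ hz (by have := S.ordered; omega)

theorem add_mul (S : IsStar E v₀ v₁ v₂ v₃ v₄) (h : Admissible n E) (t : ℤ) :
    IsStar E (v₀ + t * n) (v₁ + t * n) (v₂ + t * n) (v₃ + t * n) (v₄ + t * n) :=
  ⟨by have := S.ordered; omega, h.add_mul_mem S.mem₀₂ t, h.add_mul_mem S.mem₀₃ t,
    h.add_mul_mem S.mem₁₃ t, h.add_mul_mem S.mem₁₄ t, h.add_mul_mem S.mem₂₄ t⟩

theorem reflect (S : IsStar E v₀ v₁ v₂ v₃ v₄) :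
    IsStar (reflect E) (-v₄) (-v₃) (-v₂) (-v₁) (-v₀) :=
  ⟨by have := S.ordered; omega, neg_mem_reflect.2 S.mem₂₄, neg_mem_reflect.2 S.mem₁₄,
    neg_mem_reflect.2 S.mem₁₃, neg_mem_reflect.2 S.mem₀₃, neg_mem_reflect.2 S.mem₀₂⟩

theorem of_reflect (S : IsStar (Multitriangulation.reflect E) v₀ v₁ v₂ v₃ v₄) :
    IsStar E (-v₄) (-v₃) (-v₂) (-v₁) (-v₀) := by
  simpa only [reflect_reflect] using S.reflect

end IsStar

end Stars

section ExistenceOfStars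

variable {n : ℕ} {E : Set Edge}

/-- Two crossing edges `(p, q)` and `(r, s)` of `E` passing over the vertex `b`, of minimal total
length among such pairs. They are the long edges of the star with middle `b`. -/
structure IsShortestCrossingOver (E : Set Edge) (b p q r s : ℤ) : Prop where
  ordered : p < r ∧ r < b ∧ b < q ∧ q < s
  mem_left : (p, q) ∈ E
  mem_right : (r, s) ∈ E
  le : ∀ {p' q' r' s'}, (p', q') ∈ E → (r', s') ∈ E → p' < r' ∧ r' < b ∧ b < q' ∧ q' < s' →
    (q - p) + (s - r) ≤ (q' - p') + (s' - r')

theorem Saturated.exists_crossing_over (h : Saturated n E) {b : ℤ} (hb : (b, b + 2 * n) ∉ E) :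
    ∃ p q r s, (p, q) ∈ E ∧ (r, s) ∈ E ∧ p < r ∧ r < b ∧ b < q ∧ q < s := by
  have := h.two_le
  rcases h.blocked (by omega) le_rfl hb with
    ⟨p, q, r, s, hpq, hrs, hpr, hrq, hqs, hfirst | hmiddle | hlast⟩ | ⟨p, q, -, _⟩
  · exact ⟨_, _, _, _, h.sub_mul_mem hpq 2, h.sub_mul_mem hrs 2, by omega⟩
  · have := h.le_add_of_mem hpq
    have := h.le_add_of_mem hrs
    exact ⟨_, _, _, _, h.sub_mul_mem hrs 2, hpq, by omega⟩
  · exact ⟨p, q, r, s, hpq, hrs, by omega⟩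
  · omega

theorem Saturated.exists_isShortestCrossingOver (h : Saturated n E) {b : ℤ}
    (hb : (b, b + 2 * n) ∉ E) : ∃ p q r s, IsShortestCrossingOver E b p q r s := by
  obtain ⟨p₀, q₀, r₀, s₀, hpq₀, hrs₀, hlt₀⟩ := h.exists_crossing_over hb
  obtain ⟨_, ⟨p, q, r, s, hpq, hrs, hlt, rfl⟩, hmin⟩ :=
    Int.exists_least_of_bdd (P := fun d => ∃ p q r s, (p, q) ∈ E ∧ (r, s) ∈ E ∧
      (p < r ∧ r < b ∧ b < q ∧ q < s) ∧ d = (q - p) + (s - r))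
      ⟨0, by rintro d ⟨p, q, r, s, -, -, hlt, rfl⟩; omega⟩
      ⟨_, p₀, q₀, r₀, s₀, hpq₀, hrs₀, hlt₀, rfl⟩
  exact ⟨p, q, r, s, hlt, hpq, hrs, fun h₁ h₂ h₃ => hmin _ ⟨_, _, _, _, h₁, h₂, h₃, rfl⟩⟩

namespace IsShortestCrossingOver

variable {b p q r s : ℤ}

theorem reflect (hmin : IsShortestCrossingOver E b p q r s) :
    IsShortestCrossingOver (reflect E) (-b) (-s) (-r) (-q) (-p) where
  ordered := by have := hmin.ordered; omega
  mem_left := neg_mem_reflect.2 hmin.mem_right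
  mem_right := neg_mem_reflect.2 hmin.mem_left
  le h₁ h₂ hlt := by
    have := hmin.le (mem_reflect.1 h₂) (mem_reflect.1 h₁) (by omega)
    omega

theorem left_mem (hmin : IsShortestCrossingOver E b p q r s) (h : Saturated n E) :
    (p, b) ∈ E := by
  by_contra hmem
  obtain ⟨hlt, hpq, hrs, hle⟩ := hmin
  have := h.le_add_of_mem hpq
  rcases h.blocked (by omega) (by omega) hmem with
    ⟨α, β, γ, δ, hαβ, hγδ, hαγ, hγβ, hβδ, hfirst | hmiddle | hlast⟩ | ⟨α, β, hαβ, htranslate⟩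
  · rcases lt_or_ge q β with hqβ | hqβ
    · exact h.no_crossing hpq hαβ hγδ (by omega)
    rcases lt_or_ge α r with hαr | hαr
    · have := hle hαβ hrs (by omega)
      omega
    rcases lt_or_ge s δ with hsδ | hsδ
    · exact h.no_crossing hpq hrs hγδ (by omega)
    · have := hle hαβ hγδ (by omega)
      omega
  · rcases lt_or_ge r β with hrβ | hrβ
    · exact h.no_crossing hαβ hpq hrs (by omega)
    rcases lt_or_ge q δ with hqδ | hqδ
    · exact h.no_crossing hαβ hpq hγδ (by omega)
    · have := hle hγδ hrs (by omega)
      omega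
  · exact h.no_crossing hαβ hγδ hpq (by omega)
  · rcases lt_or_ge q β with hqβ | hqβ
    · exact h.no_crossing hpq hαβ (h.add_mem hpq) (by omega)
    rcases lt_or_ge α r with hαr | hαr
    · have := hle hαβ hrs (by omega)
      omega
    rcases lt_or_ge s (q + n) with hsq | hsq
    · exact h.no_crossing hpq hrs (h.add_mem hpq) (by omega)
    · have := hle hpq (h.add_mem hpq) (by omega)
      omega

theorem middle_mem (hmin : IsShortestCrossingOver E b p q r s) (h : Saturated n E) :
    (r, q) ∈ E := by
  by_contra hmem
  obtain ⟨hlt, hpq, hrs, hle⟩ := hmin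
  have := h.le_add_of_mem hpq
  have := h.le_add_of_mem hrs
  rcases h.blocked (by omega) (by omega) hmem with
    ⟨α, β, γ, δ, hαβ, hγδ, hαγ, hγβ, hβδ, hfirst | hmiddle | hlast⟩ | ⟨α, β, -, htranslate⟩
  · exact h.no_crossing hpq hαβ hγδ (by omega)
  · rcases lt_or_ge b β with hbβ | hbβ
    · rcases lt_or_ge α p with hαp | hαp
      · exact h.no_crossing hαβ hpq hγδ (by omega)
      · have := hle hαβ hrs (by omega)
        omega
    · rcases lt_or_ge s δ with hsδ | hsδ
      · exact h.no_crossing hαβ hrs hγδ (by omega)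
      · have := hle hpq hγδ (by omega)
        omega
  · exact h.no_crossing hαβ hγδ hrs (by omega)
  · exact h.no_crossing hpq hrs (h.add_mem hpq) (by omega)

theorem isStar (hmin : IsShortestCrossingOver E b p q r s) (h : Saturated n E) :
    IsStar E p r b q s :=
  ⟨hmin.ordered, hmin.left_mem h, hmin.mem_left, hmin.middle_mem h, hmin.mem_right,
    neg_mem_reflect.1 (hmin.reflect.left_mem h.reflect)⟩

end IsShortestCrossingOver

namespace Saturated

theorem exists_isStar_middle (h : Saturated n E) {b : ℤ} (hb : (b, b + 2 * n) ∉ E) :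
    ∃ v₀ v₁ v₃ v₄, IsStar E v₀ v₁ b v₃ v₄ := by
  obtain ⟨p, q, r, s, hmin⟩ := h.exists_isShortestCrossingOver hb
  exact ⟨p, r, q, s, hmin.isStar h⟩

theorem exists_loop (h : Saturated n E) : ∃ c : ℤ, (c, c + 2 * n) ∈ E := by
  obtain ⟨d, ⟨a, had⟩, hmax⟩ := Int.exists_greatest_of_bdd
    (P := fun d : ℤ => ∃ a : ℤ, (a, a + d) ∈ E)
    ⟨2 * n, by rintro d ⟨a, had⟩; have := h.le_add_of_mem had; omega⟩
    ⟨1, 0, h.mem_of_length_le_two (by omega) (by omega)⟩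
  refine ⟨a + d, by_contra fun hmiddle => ?_⟩
  obtain ⟨v₀, v₁, v₃, v₄, S⟩ := h.exists_isStar_middle hmiddle
  have hle : v₀ ≤ a := not_lt.1 fun hlt => S.notMem_angle₂_left h.toAdmissible hlt had
  have := hmax (v₃ - v₀) ⟨v₀, by simpa using S.mem₀₃⟩
  have := S.ordered
  omega

end Saturated

/-- Three edges forming a zigzag `v₀ v₃ v₁ v₄` whose two angles contain no edge. They are three
consecutive edges of a star, see `IsZigzag.exists_isStar`. -/
structure IsZigzag (E : Set Edge) (v₀ v₁ v₃ v₄ : ℤ) : Prop where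
  ordered : v₀ < v₁ ∧ v₁ + 2 ≤ v₃ ∧ v₃ < v₄
  mem₀₃ : (v₀, v₃) ∈ E
  mem₁₃ : (v₁, v₃) ∈ E
  mem₁₄ : (v₁, v₄) ∈ E
  notMem_angle₃ : ∀ z, v₀ < z → z < v₁ → (z, v₃) ∉ E
  notMem_angle₁ : ∀ z, v₃ < z → z < v₄ → (v₁, z) ∉ E

namespace IsZigzag

variable {v₀ v₁ t v₃ v₄ : ℤ}

theorem left_mem (Z : IsZigzag E v₀ v₁ v₃ v₄) (h : Saturated n E) (hv₁t : v₁ < t) (htv₃ : t < v₃)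
    (ht : t = v₁ + 1 ∨ ∃ o < v₁, (o, t) ∈ E)
    (hmax : ∀ z, t < z → z < v₃ → ¬ ∃ o < v₁, (o, z) ∈ E) : (v₀, t) ∈ E := by
  by_contra hmem
  obtain ⟨hlt, h₀₃, h₁₃, h₁₄, hangle₃, hangle₁⟩ := Z
  have := h.le_add_of_mem h₀₃
  have hbetween {α β γ δ : ℤ} (hαβ : (α, β) ∈ E) (hγδ : (γ, δ) ∈ E) :
      ¬(v₁ ≤ α ∧ α < γ ∧ γ < t ∧ t < β ∧ β < δ) := by
    intro hlt
    rcases ht with rfl | ⟨o, ho, hot⟩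
    · omega
    · exact h.no_crossing hot hαβ hγδ (by omega)
  have hcorner {α β : ℤ} (hαβ : (α, β) ∈ E) : ¬(v₀ < α ∧ α < v₁ ∧ t < β ∧ β ≤ v₃) := by
    rintro ⟨h₀, h₁, ht, h₃⟩
    rcases h₃.lt_or_eq with h₃ | rfl
    · exact hmax β ht h₃ ⟨α, h₁, hαβ⟩
    · exact hangle₃ α h₀ h₁ hαβ
  rcases h.blocked (by omega) (by omega) hmem with
    ⟨α, β, γ, δ, hαβ, hγδ, hαγ, hγβ, hβδ, hfirst | hmiddle | hlast⟩ | ⟨α, β, hαβ, htranslate⟩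
  · have := hbetween hαβ hγδ
    have := hcorner hαβ
    exact h.no_crossing h₀₃ hαβ hγδ (by omega)
  · rcases lt_or_ge v₁ β with hβ | hβ
    · exact h.no_crossing hαβ h₀₃ h₁₄ (by omega)
    · have := hcorner hγδ
      exact h.no_crossing hαβ h₀₃ hγδ (by omega)
  · exact h.no_crossing hαβ hγδ h₀₃ (by omega)
  · have := hbetween hαβ (h.add_mem h₀₃)
    have := hcorner hαβ
    exact h.no_crossing h₀₃ hαβ (h.add_mem h₀₃) (by omega)

theorem right_mem (Z : IsZigzag E v₀ v₁ v₃ v₄) (h : Saturated n E) (hv₁t : v₁ < t) (htv₃ : t < v₃)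
    (hv₀t : (v₀, t) ∈ E) (hmax : ∀ z, t < z → z < v₃ → ¬ ∃ o < v₁, (o, z) ∈ E) :
    (t, v₄) ∈ E := by
  by_contra hmem
  obtain ⟨hlt, h₀₃, h₁₃, h₁₄, -, hangle₁⟩ := Z
  have := h.le_add_of_mem h₁₄
  have hcorner {α β : ℤ} (hαβ : (α, β) ∈ E) : ¬(v₁ ≤ α ∧ α < t ∧ v₃ < β ∧ β < v₄) := by
    rintro ⟨h₁, ht, h₃, h₄⟩
    rcases h₁.eq_or_lt with rfl | h₁
    · exact hangle₁ β h₃ h₄ hαβ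
    · exact h.no_crossing hv₀t h₁₃ hαβ (by omega)
  rcases h.blocked (by omega) (by omega) hmem with
    ⟨α, β, γ, δ, hαβ, hγδ, hαγ, hγβ, hβδ, hfirst | hmiddle | hlast⟩ | ⟨α, β, hαβ, htranslate⟩
  · exact h.no_crossing h₁₄ hαβ hγδ (by omega)
  · have := hcorner hαβ
    rcases lt_or_ge γ v₃ with hγ | hγ
    · exact h.no_crossing h₀₃ h₁₄ hγδ (by omega)
    · exact h.no_crossing hαβ h₁₄ hγδ (by omega)
  · have := hcorner hγδ
    rcases lt_or_ge γ v₁ with hγ | hγ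
    · exact h.no_crossing hαβ hγδ h₁₄ (by omega)
    rcases lt_or_ge v₀ α with hα | hα
    · exact h.no_crossing hv₀t hαβ hγδ (by omega)
    · exact hmax β (by omega) (by omega) ⟨α, by omega, hαβ⟩
  · have := hcorner (h.sub_mem hαβ)
    rcases lt_or_ge α v₃ with hα | hα
    · exact h.no_crossing h₀₃ h₁₄ hαβ (by omega)
    rcases lt_or_ge α (v₁ + n) with hαn | hαn
    · exact h.no_crossing h₁₄ hαβ (h.add_mem h₁₄) (by omega)
    · exact hmax (v₄ - n) (by omega) (by omega) ⟨v₁ - n, by omega, h.sub_mem h₁₄⟩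

theorem exists_isStar (Z : IsZigzag E v₀ v₁ v₃ v₄) (h : Saturated n E) :
    ∃ t, IsStar E v₀ v₁ t v₃ v₄ := by
  have hlt := Z.ordered
  obtain ⟨t, hv₁t, htv₃, ht, hmax⟩ := exists_greatest_mem_Ico
    (P := fun z => z = v₁ + 1 ∨ ∃ o < v₁, (o, z) ∈ E) (a := v₁ + 1) (b := v₃) (by omega) (.inl rfl)
  have hmax' (z : ℤ) (htz : t < z) (hz : z < v₃) : ¬ ∃ o < v₁, (o, z) ∈ E :=
    fun ho => hmax z htz hz (.inr ho)
  have h₀₂ := Z.left_mem h (by omega) htv₃ ht hmax'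
  exact ⟨t, by omega, h₀₂, Z.mem₀₃, Z.mem₁₃, Z.mem₁₄,
    Z.right_mem h (by omega) htv₃ h₀₂ hmax'⟩

end IsZigzag

namespace Saturated

variable {x y : ℤ}

theorem exists_isStar_of_first (h : Saturated n E) (hxy : (x, y) ∈ E) (hloop : y < x + 2 * n)
    (hfirst : ∀ z < x, (z, y) ∉ E) : ∃ v₁ v₃ v₄, IsStar E x v₁ y v₃ v₄ := by
  obtain ⟨v₀, v₁, v₃, v₄, S⟩ := h.exists_isStar_middle (b := y) fun hy =>
    hfirst (y - 2 * n) (by omega) (by simpa using h.sub_mul_mem hy 2)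
  obtain rfl : v₀ = x := by
    refine le_antisymm (not_lt.1 fun hlt => ?_) (not_lt.1 fun hlt => hfirst _ hlt S.mem₀₂)
    exact S.notMem_angle₂_left h.toAdmissible hlt hxy
  exact ⟨v₁, v₃, v₄, S⟩

theorem exists_isStar_of_last (h : Saturated n E) (hxy : (x, y) ∈ E) (hloop : y < x + 2 * n)
    (hlast : ∀ z > y, (x, z) ∉ E) : ∃ v₀ v₁ v₃, IsStar E v₀ v₁ x v₃ y := by
  obtain ⟨v₁, v₃, v₄, S⟩ := h.reflect.exists_isStar_of_first (x := -y) (y := -x)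
    (neg_mem_reflect.2 hxy) (by omega) fun z hz => by
      rw [mem_reflect, neg_neg]
      exact hlast _ (by omega)
  exact ⟨_, _, _, by simpa using S.of_reflect⟩

theorem exists_isStar_short_edge (h : Saturated n E) (hxy : (x, y) ∈ E) (hle : x + 2 ≤ y)
    (hloop : y < x + 2 * n) : ∃ v₀ v₁ v₂ v₃ v₄, IsStar E v₀ v₁ v₂ v₃ v₄ ∧
      ((x = v₀ ∧ y = v₂) ∨ (x = v₁ ∧ y = v₃) ∨ (x = v₂ ∧ y = v₄)) := by
  by_cases hfirst : ∀ z < x, (z, y) ∉ E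
  · obtain ⟨v₁, v₃, v₄, S⟩ := h.exists_isStar_of_first hxy hloop hfirst
    exact ⟨_, _, _, _, _, S, .inl ⟨rfl, rfl⟩⟩
  by_cases hlast : ∀ z > y, (x, z) ∉ E
  · obtain ⟨v₀, v₁, v₃, S⟩ := h.exists_isStar_of_last hxy hloop hlast
    exact ⟨_, _, _, _, _, S, .inr (.inr ⟨rfl, rfl⟩)⟩
  push Not at hfirst hlast
  obtain ⟨a, hax, hay⟩ := hfirst
  obtain ⟨b, hyb, hxb⟩ := hlast
  obtain ⟨v₀, -, hv₀, h₀₃, hangle₃⟩ :=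
    exists_greatest_mem_Ico (P := fun z => (z, y) ∈ E) hax hay
  obtain ⟨v₄, hv₄, -, h₁₄, hangle₁⟩ := exists_least_mem_Ioc (P := fun z => (x, z) ∈ E) hyb hxb
  obtain ⟨t, S⟩ := IsZigzag.exists_isStar ⟨by omega, h₀₃, hxy, h₁₄, hangle₃, hangle₁⟩ h
  exact ⟨_, _, _, _, _, S, .inr (.inl ⟨rfl, rfl⟩)⟩

theorem exists_isStar_angle (h : Saturated n E) (hlt : x + 2 < y) (hle : y ≤ x + 2 * n) :
    ∃ v₀ v₁ v₂ v₃ v₄, IsStar E v₀ v₁ v₂ v₃ v₄ ∧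
      ((y = v₂ ∧ x < v₀) ∨ (y = v₃ ∧ v₀ ≤ x ∧ x < v₁) ∨ (y = v₄ ∧ v₁ ≤ x ∧ x < v₂)) := by
  obtain ⟨x', hxx', hx'y, hmem, hmin⟩ := exists_least_mem_Ioc (P := fun z => (z, y) ∈ E)
    (a := x) (b := y - 2) (by omega) (h.mem_of_length_le_two (by omega) (by omega))
  obtain ⟨v₀, v₁, v₂, v₃, v₄, S, hpos⟩ :=
    h.exists_isStar_short_edge hmem (by omega) (by omega)
  refine ⟨v₀, v₁, v₂, v₃, v₄, S, ?_⟩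
  have := S.ordered
  rcases hpos with ⟨rfl, rfl⟩ | ⟨rfl, rfl⟩ | ⟨rfl, rfl⟩
  · exact .inl ⟨rfl, hxx'⟩
  · exact .inr (.inl ⟨rfl, not_lt.1 fun hx => hmin v₀ hx S.ordered.1 S.mem₀₃, hxx'⟩)
  · exact .inr (.inr ⟨rfl, not_lt.1 fun hx => hmin v₁ hx S.ordered.2.1 S.mem₁₄, hxx'⟩)

theorem exists_isStar_long_edge (h : Saturated n E) (hxy : (x, y) ∈ E) (hlt : x + 2 < y) :
    ∃ v₀ v₁ v₂ v₃ v₄, IsStar E v₀ v₁ v₂ v₃ v₄ ∧ ((x = v₀ ∧ y = v₃) ∨ (x = v₁ ∧ y = v₄)) := by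
  obtain ⟨v₀, v₁, v₂, v₃, v₄, S, hpos⟩ := h.exists_isStar_angle hlt (h.le_add_of_mem hxy)
  refine ⟨v₀, v₁, v₂, v₃, v₄, S, ?_⟩
  rcases hpos with ⟨rfl, hx⟩ | ⟨rfl, hx₀, hx₁⟩ | ⟨rfl, hx₁, hx₂⟩
  · exact (S.notMem_angle₂_left h.toAdmissible hx hxy).elim
  · refine .inl ⟨hx₀.antisymm' (not_lt.1 fun hx => ?_), rfl⟩
    exact S.notMem_angle₃ h.toAdmissible hx hx₁ hxy
  · refine .inr ⟨hx₁.antisymm' (not_lt.1 fun hx => ?_), rfl⟩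
    exact S.notMem_angle₄ h.toAdmissible hx hx₂ hxy

theorem exists_isStar_bisected_right (h : Saturated n E) (hxy : (x, y) ∉ E) (hlt : x + 2 < y)
    (hle : y ≤ x + 2 * n) : ∃ v₀ v₁ v₂ v₃ v₄, IsStar E v₀ v₁ v₂ v₃ v₄ ∧
      ((y = v₂ ∧ x < v₀) ∨ (y = v₃ ∧ v₀ < x ∧ x < v₁) ∨ (y = v₄ ∧ v₁ < x ∧ x < v₂)) := by
  obtain ⟨v₀, v₁, v₂, v₃, v₄, S, hpos⟩ := h.exists_isStar_angle hlt hle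
  refine ⟨v₀, v₁, v₂, v₃, v₄, S, ?_⟩
  rcases hpos with ⟨rfl, hx⟩ | ⟨rfl, hx₀, hx₁⟩ | ⟨rfl, hx₁, hx₂⟩
  · exact .inl ⟨rfl, hx⟩
  · refine .inr (.inl ⟨rfl, hx₀.lt_of_ne ?_, hx₁⟩)
    rintro rfl
    exact hxy S.mem₀₃
  · refine .inr (.inr ⟨rfl, hx₁.lt_of_ne ?_, hx₂⟩)
    rintro rfl
    exact hxy S.mem₁₄

theorem exists_isStar_bisected_left (h : Saturated n E) (hxy : (x, y) ∉ E) (hlt : x + 2 < y)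
    (hle : y ≤ x + 2 * n) : ∃ v₀ v₁ v₂ v₃ v₄, IsStar E v₀ v₁ v₂ v₃ v₄ ∧
      ((x = v₂ ∧ v₄ < y) ∨ (x = v₁ ∧ v₃ < y ∧ y < v₄) ∨ (x = v₀ ∧ v₂ < y ∧ y < v₃)) := by
  obtain ⟨v₀, v₁, v₂, v₃, v₄, S, hpos⟩ := h.reflect.exists_isStar_bisected_right
    (x := -y) (y := -x) (mt neg_mem_reflect.1 hxy) (by omega) (by omega)
  exact ⟨_, _, _, _, _, S.of_reflect, by omega⟩

end Saturated

end ExistenceOfStars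

section UniquenessOfStars

variable {n : ℕ} {E : Set Edge} {v₀ v₁ v₂ v₃ v₄ w₀ w₁ w₂ w₃ w₄ : ℤ}

namespace IsStar

theorem eq₀_of_eq₂ (S : IsStar E v₀ v₁ v₂ v₃ v₄) (S' : IsStar E w₀ w₁ v₂ w₃ w₄)
    (h : Admissible n E) : v₀ = w₀ :=
  le_antisymm (not_lt.1 fun hlt => S.notMem_angle₂_left h hlt S'.mem₀₂)
    (not_lt.1 fun hlt => S'.notMem_angle₂_left h hlt S.mem₀₂)

theorem eq₁_of_eq₀₃ (S : IsStar E v₀ v₁ v₂ v₃ v₄) (S' : IsStar E v₀ w₁ w₂ v₃ w₄)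
    (h : Admissible n E) : v₁ = w₁ :=
  le_antisymm (not_lt.1 fun hlt => S.notMem_angle₃ h S'.ordered.1 hlt S'.mem₁₃)
    (not_lt.1 fun hlt => S'.notMem_angle₃ h S.ordered.1 hlt S.mem₁₃)

theorem eq₂_of_eq₀₃ (S : IsStar E v₀ v₁ v₂ v₃ v₄) (S' : IsStar E v₀ w₁ w₂ v₃ w₄)
    (h : Admissible n E) : v₂ = w₂ :=
  le_antisymm (not_lt.1 fun hlt => S'.notMem_angle₀ h hlt S.ordered.2.2.1 S.mem₀₂)
    (not_lt.1 fun hlt => S.notMem_angle₀ h hlt S'.ordered.2.2.1 S'.mem₀₂)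

theorem eq₂_of_eq₁₄ (S : IsStar E v₀ v₁ v₂ v₃ v₄) (S' : IsStar E w₀ v₁ w₂ w₃ v₄)
    (h : Admissible n E) : v₂ = w₂ :=
  le_antisymm (not_lt.1 fun hlt => S.notMem_angle₄ h S'.ordered.2.1 hlt S'.mem₂₄)
    (not_lt.1 fun hlt => S'.notMem_angle₄ h S.ordered.2.1 hlt S.mem₂₄)

theorem eq₃_of_eq₀₂ (S : IsStar E v₀ v₁ v₂ v₃ v₄) (S' : IsStar E v₀ w₁ v₂ w₃ w₄)
    (h : Admissible n E) : v₃ = w₃ :=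
  le_antisymm (not_lt.1 fun hlt => S.notMem_angle₀ h S'.ordered.2.2.1 hlt S'.mem₀₃)
    (not_lt.1 fun hlt => S'.notMem_angle₀ h S.ordered.2.2.1 hlt S.mem₀₃)

theorem eq₄_of_eq₁₃ (S : IsStar E v₀ v₁ v₂ v₃ v₄) (S' : IsStar E w₀ v₁ w₂ v₃ w₄)
    (h : Admissible n E) : v₄ = w₄ :=
  le_antisymm (not_lt.1 fun hlt => S.notMem_angle₁ h S'.ordered.2.2.2 hlt S'.mem₁₄)
    (not_lt.1 fun hlt => S'.notMem_angle₁ h S.ordered.2.2.2 hlt S.mem₁₄)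

theorem eq_of_middle (S : IsStar E v₀ v₁ v₂ v₃ v₄) (S' : IsStar E w₀ w₁ v₂ w₃ w₄)
    (h : Admissible n E) : v₀ = w₀ ∧ v₁ = w₁ ∧ v₃ = w₃ ∧ v₄ = w₄ := by
  obtain rfl := S.eq₀_of_eq₂ S' h
  obtain rfl := S.eq₃_of_eq₀₂ S' h
  obtain rfl := S.eq₁_of_eq₀₃ S' h
  exact ⟨rfl, rfl, rfl, S.eq₄_of_eq₁₃ S' h⟩

theorem long_edges_ne (S : IsStar E v₀ v₁ v₂ v₃ v₄) (S' : IsStar E w₀ w₁ w₂ w₃ w₄)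
    (h : Admissible n E) : (v₀, v₃) ≠ (w₁, w₄) := by
  rintro ⟨⟩
  obtain rfl : v₂ = w₃ := le_antisymm
    (not_lt.1 fun hlt => S'.notMem_angle₁ h hlt S.ordered.2.2.1 S.mem₀₂)
    (not_lt.1 fun hlt => S.notMem_angle₀ h hlt S'.ordered.2.2.2 S'.mem₁₃)
  exact S.notMem_angle₂_left h S'.ordered.1 S'.mem₀₃

theorem loop_notMem (S : IsStar E v₀ v₁ v₂ v₃ v₄) (h : Admissible n E) :
    (v₂, v₂ + 2 * n) ∉ E := by
  have := h.le_add_of_mem S.mem₁₄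
  have := S.ordered
  exact S.notMem_angle₂_right h (by omega)

end IsStar

theorem exists_le_add_mul_lt (hn : 0 < n) (c x : ℤ) :
    ∃ t : ℤ, c ≤ x + t * n ∧ x + t * n < c + n := by
  obtain ⟨t, ht, -⟩ := existsUnique_add_zsmul_mem_Ico (Int.natCast_pos.2 hn) x c
  exact ⟨t, by simpa using ht⟩

theorem exists_eq_add_mul_of_loop_mem {c c' : ℤ} (h : Admissible n E) (hc : (c, c + 2 * n) ∈ E)
    (hc' : (c', c' + 2 * n) ∈ E) : ∃ t : ℤ, c = c' + t * n := by
  obtain ⟨t, hle, hlt⟩ := exists_le_add_mul_lt (by have := h.two_le; omega : 0 < n) c c'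
  refine ⟨t, hle.eq_or_lt.resolve_right fun hgt => ?_⟩
  exact h.no_crossing hc (h.add_mul_mem hc' t) (h.add_mem hc) (by omega)

end UniquenessOfStars

section Counting

variable {n : ℕ} {E : Set Edge} {c v₀ v₁ v₂ v₃ v₄ w₀ w₁ w₂ w₃ w₄ : ℤ}

theorem eq_of_add_mul_eq {x y t : ℤ} (hx : x ∈ Set.Ioo c (c + n)) (hy : y ∈ Set.Ioo c (c + n))
    (h : x + t * n = y) : x = y := by
  obtain ⟨hx₁, hx₂⟩ := hx
  obtain ⟨hy₁, hy₂⟩ := hy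
  have ht : t = 0 := by
    rw [← Int.abs_lt_one_iff]
    by_contra! hle
    have : (n : ℤ) ≤ |t * n| := by
      rw [abs_mul, Nat.abs_cast]
      exact le_mul_of_one_le_left (by positivity) hle
    have := abs_lt.2 (⟨by omega, by omega⟩ : -(n : ℤ) < t * n ∧ t * n < n)
    omega
  simpa [ht] using h

theorem Saturated.exists_isStar_of_relevant (h : Saturated n E) {x y : ℤ}
    (hc : (c, c + 2 * n) ∈ E) (hxy : (x, y) ∈ E) (hlt : x + 2 < y) :
    ∃ v₀ v₁ v₂ v₃ v₄, IsStar E v₀ v₁ v₂ v₃ v₄ ∧ v₂ ∈ Set.Ioo c (c + n) ∧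
      (orbitOf n (v₀, v₃) = orbitOf n (x, y) ∨ orbitOf n (v₁, v₄) = orbitOf n (x, y)) := by
  obtain ⟨v₀, v₁, v₂, v₃, v₄, S, hS⟩ := h.exists_isStar_long_edge hxy hlt
  obtain ⟨t, hle, hlt⟩ := exists_le_add_mul_lt (by have := h.two_le; omega : 0 < n) c v₂
  have S' := S.add_mul h.toAdmissible t
  refine ⟨_, _, _, _, _, S', ⟨hle.lt_of_ne ?_, hlt⟩, ?_⟩
  · rintro rfl
    exact S'.loop_notMem h.toAdmissible hc
  · rw [orbitOf_eq_iff, orbitOf_eq_iff, mem_orbitOf, mem_orbitOf]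
    rcases hS with ⟨rfl, rfl⟩ | ⟨rfl, rfl⟩
    · exact .inl ⟨-t, by ring, by ring⟩
    · exact .inr ⟨-t, by ring, by ring⟩

theorem IsStar.eq₂_of_orbitOf_eq_left (S : IsStar E v₀ v₁ v₂ v₃ v₄)
    (S' : IsStar E w₀ w₁ w₂ w₃ w₄) (h : Admissible n E) (hv : v₂ ∈ Set.Ioo c (c + n))
    (hw : w₂ ∈ Set.Ioo c (c + n)) (heq : orbitOf n (v₀, v₃) = orbitOf n (w₀, w₃)) : v₂ = w₂ := by
  obtain ⟨t, rfl, rfl⟩ := mem_orbitOf.1 (orbitOf_eq_iff.1 heq)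
  exact eq_of_add_mul_eq hv hw ((S.add_mul h t).eq₂_of_eq₀₃ S' h)

theorem IsStar.eq₂_of_orbitOf_eq_right (S : IsStar E v₀ v₁ v₂ v₃ v₄)
    (S' : IsStar E w₀ w₁ w₂ w₃ w₄) (h : Admissible n E) (hv : v₂ ∈ Set.Ioo c (c + n))
    (hw : w₂ ∈ Set.Ioo c (c + n)) (heq : orbitOf n (v₁, v₄) = orbitOf n (w₁, w₄)) : v₂ = w₂ := by
  obtain ⟨t, rfl, rfl⟩ := mem_orbitOf.1 (orbitOf_eq_iff.1 heq)
  exact eq_of_add_mul_eq hv hw ((S.add_mul h t).eq₂_of_eq₁₄ S' h)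

theorem IsStar.orbitOf_long_edges_ne (S : IsStar E v₀ v₁ v₂ v₃ v₄)
    (S' : IsStar E w₀ w₁ w₂ w₃ w₄) (h : Admissible n E) :
    orbitOf n (v₀, v₃) ≠ orbitOf n (w₁, w₄) := by
  intro heq
  obtain ⟨t, h₁, h₄⟩ := mem_orbitOf.1 (orbitOf_eq_iff.1 heq)
  exact (S.add_mul h t).long_edges_ne S' h (by rw [h₁, h₄])

/-- The orbits of the `2`-relevant edges of `E`. -/
def relevantOrbits (n : ℕ) (E : Set Edge) : Set (Set Edge) :=
  orbitOf n '' {e ∈ E | 2 < e.2 - e.1 ∧ e.2 - e.1 ≤ 2 * (n : ℤ)}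

theorem Admissible.orbitOf_mem_relevantOrbits (h : Admissible n E) {x y : ℤ} (hxy : (x, y) ∈ E)
    (hlt : x + 2 < y) : orbitOf n (x, y) ∈ relevantOrbits n E := by
  have := h.le_add_of_mem hxy
  exact Set.mem_image_of_mem _ ⟨hxy, by dsimp only; omega, by dsimp only; omega⟩

theorem Admissible.orbitOf_mem_relevantOrbits_iff (h : Admissible n E) {x y : ℤ}
    (hxy : x + 2 < y) :
    orbitOf n (x, y) ∈ relevantOrbits n E ↔ (x, y) ∈ E := by
  refine ⟨?_, fun hmem => h.orbitOf_mem_relevantOrbits hmem hxy⟩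
  rintro ⟨e, he, heq⟩
  exact h.orbitOf_subset he.1 (orbitOf_eq_iff.1 heq)

theorem Saturated.relevantOrbits_eq (h : Saturated n E) (hc : (c, c + 2 * n) ∈ E)
    {V₀ V₁ V₃ V₄ : ℤ → ℤ}
    (hS : ∀ b ∈ Set.Ioo c (c + n), IsStar E (V₀ b) (V₁ b) b (V₃ b) (V₄ b)) :
    relevantOrbits n E = (fun b => orbitOf n (V₀ b, V₃ b)) '' Set.Ioo c (c + n) ∪
      (fun b => orbitOf n (V₁ b, V₄ b)) '' Set.Ioo c (c + n) := by
  apply Set.Subset.antisymm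
  · rintro _ ⟨⟨x, y⟩, ⟨hxy, hlt, -⟩, rfl⟩
    obtain ⟨v₀, v₁, b, v₃, v₄, S, hb, heq⟩ :=
      h.exists_isStar_of_relevant hc hxy (by dsimp only at hlt; omega)
    obtain ⟨rfl, rfl, rfl, rfl⟩ := S.eq_of_middle (hS b hb) h.toAdmissible
    exact heq.imp (fun heq => ⟨b, hb, heq⟩) fun heq => ⟨b, hb, heq⟩
  · rintro _ (⟨b, hb, rfl⟩ | ⟨b, hb, rfl⟩) <;> have := (hS b hb).ordered
    · exact h.orbitOf_mem_relevantOrbits (hS b hb).mem₀₃ (by omega)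
    · exact h.orbitOf_mem_relevantOrbits (hS b hb).mem₁₄ (by omega)

theorem Saturated.ncard_relevantOrbits (h : Saturated n E) :
    (relevantOrbits n E).ncard = 2 * (n - 1) := by
  obtain ⟨c, hc⟩ := h.exists_loop
  have hex : ∀ b ∈ Set.Ioo c (c + n), ∃ v₀ v₁ v₃ v₄, IsStar E v₀ v₁ b v₃ v₄ :=
    fun b ⟨hcb, hbc⟩ => h.exists_isStar_middle fun hb =>
      h.no_crossing hc hb (h.add_mem hc) (by omega)
  choose! V₀ V₁ V₃ V₄ hS using hex
  have hcard : (Set.Ioo c (c + n)).ncard = n - 1 := by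
    rw [← Finset.coe_Ioo, Set.ncard_coe_finset, Int.card_Ioo]
    omega
  rw [h.relevantOrbits_eq hc hS, Set.ncard_union_eq, Set.InjOn.ncard_image, Set.InjOn.ncard_image,
    hcard, two_mul]
  · exact fun b hb b' hb' =>
      (hS b hb).eq₂_of_orbitOf_eq_right (hS b' hb') h.toAdmissible hb hb'
  · exact fun b hb b' hb' =>
      (hS b hb).eq₂_of_orbitOf_eq_left (hS b' hb') h.toAdmissible hb hb'
  · rw [Set.disjoint_left]
    rintro _ ⟨b, hb, rfl⟩ ⟨b', hb', heq⟩
    exact (hS b hb).orbitOf_long_edges_ne (hS b' hb') h.toAdmissible heq.symm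

end Counting

section Exchange

variable {n : ℕ} {E : Set Edge} {e f g : Edge} {p q u v x y : ℤ}

/-- The result of replacing the orbit of `e` in `E` by the orbit of `f`. -/
def exchange (n : ℕ) (E : Set Edge) (e f : Edge) : Set Edge :=
  (E \ orbitOf n e) ∪ orbitOf n f

theorem mem_exchange_self : f ∈ exchange n E e f := Or.inr (mem_orbitOf_self f)

theorem exchange_congr (h : orbitOf n f = orbitOf n g) : exchange n E e f = exchange n E e g := by
  rw [exchange, h, exchange]

theorem mem_exchange_of_mem (h : (p, q) ∈ E) :
    (∃ t : ℤ, u = p + t * n ∧ v = q + t * n) ∨ (p, q) ∈ exchange n E (u, v) f := by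
  by_cases ho : (p, q) ∈ orbitOf n (u, v)
  · exact .inl (mem_orbitOf.1 (mem_orbitOf_comm.1 ho))
  · exact .inr (.inl ⟨h, ho⟩)

theorem mem_exchange_of_sub_ne (h : (p, q) ∈ E) (hne : q - p ≠ v - u) :
    (p, q) ∈ exchange n E (u, v) f :=
  .inl ⟨h, fun ho => hne (sub_eq_sub_of_mem_orbitOf ho)⟩

theorem mem_orbitOf_neg : (p, q) ∈ orbitOf n (-y, -x) ↔ (-q, -p) ∈ orbitOf n (x, y) := by
  simp only [mem_orbitOf]
  constructor <;> rintro ⟨t, h₁, h₂⟩ <;>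
    exact ⟨-t, by rw [neg_mul]; omega, by rw [neg_mul]; omega⟩

theorem reflect_exchange :
    reflect (exchange n E (u, v) (x, y)) = exchange n (reflect E) (-v, -u) (-y, -x) := by
  ext ⟨p, q⟩
  simp only [exchange, mem_reflect, Set.mem_union, Set.mem_sdiff, mem_orbitOf_neg]

end Exchange

section ShortStars

variable {n : ℕ} {E : Set Edge} {r₀ r₁ r₂ r₃ r₄ r₁' r₃' r₄' : ℤ}

/-- The vertices `r₀, …, r₄` form, in this cyclic order, a star in which `(r₀, r₂)` is a *short*
edge, i.e. skips only the vertex `r₁` on its inner side. -/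
def IsShortStar (E : Set Edge) (r₀ r₁ r₂ r₃ r₄ : ℤ) : Prop :=
  IsStar E r₀ r₁ r₂ r₃ r₄ ∨ IsStar E r₄ r₀ r₁ r₂ r₃ ∨ IsStar E r₃ r₄ r₀ r₁ r₂

theorem Saturated.exists_isShortStar (h : Saturated n E) (hmem : (r₀, r₂) ∈ E)
    (hle : r₀ + 2 ≤ r₂) (hlt : r₂ < r₀ + 2 * n) : ∃ r₁ r₃ r₄, IsShortStar E r₀ r₁ r₂ r₃ r₄ := by
  obtain ⟨v₀, v₁, v₂, v₃, v₄, S, ⟨rfl, rfl⟩ | ⟨rfl, rfl⟩ | ⟨rfl, rfl⟩⟩ :=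
    h.exists_isStar_short_edge hmem hle hlt
  · exact ⟨_, _, _, .inl S⟩
  · exact ⟨_, _, _, .inr (.inl S)⟩
  · exact ⟨_, _, _, .inr (.inr S)⟩

namespace IsShortStar

theorem ordered (R : IsShortStar E r₀ r₁ r₂ r₃ r₄) : r₀ < r₁ ∧ r₁ < r₂ ∧
    ((r₂ < r₃ ∧ r₃ < r₄) ∨ (r₂ < r₃ ∧ r₄ < r₀) ∨ (r₃ < r₄ ∧ r₄ < r₀)) := by
  rcases R with R | R | R <;> have := R.ordered <;> omega

theorem mem_of_lt₃ (R : IsShortStar E r₀ r₁ r₂ r₃ r₄) (hlt : r₂ < r₃) :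
    (r₀, r₃) ∈ E ∧ (r₁, r₃) ∈ E := by
  rcases R with R | R | R
  · exact ⟨R.mem₀₃, R.mem₁₃⟩
  · exact ⟨R.mem₁₄, R.mem₂₄⟩
  · have := R.ordered
    omega

theorem mem_of_lt₀ (R : IsShortStar E r₀ r₁ r₂ r₃ r₄) (hlt : r₄ < r₀) :
    (r₄, r₁) ∈ E ∧ (r₄, r₂) ∈ E := by
  rcases R with R | R | R
  · have := R.ordered
    omega
  · exact ⟨R.mem₀₂, R.mem₀₃⟩
  · exact ⟨R.mem₁₃, R.mem₁₄⟩

theorem isStar_of_lt₄ (R : IsShortStar E r₀ r₁ r₂ r₃ r₄) (hlt : r₂ < r₄) :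
    IsStar E r₀ r₁ r₂ r₃ r₄ := by
  rcases R with R | R | R <;> first | exact R | (have := R.ordered; omega)

theorem isStar_of_lt_of_lt (R : IsShortStar E r₀ r₁ r₂ r₃ r₄) (h₃ : r₂ < r₃) (h₄ : r₄ < r₀) :
    IsStar E r₄ r₀ r₁ r₂ r₃ := by
  rcases R with R | R | R <;> first | exact R | (have := R.ordered; omega)

theorem isStar_of_lt₀ (R : IsShortStar E r₀ r₁ r₂ r₃ r₄) (hlt : r₃ < r₀) :
    IsStar E r₃ r₄ r₀ r₁ r₂ := by
  rcases R with R | R | R <;> first | exact R | (have := R.ordered; omega)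

theorem ne_loop (R : IsShortStar E r₀ r₁ r₂ r₃ r₄) (h : Admissible n E) : r₂ ≠ r₀ + 2 * n := by
  rintro rfl
  have := R.ordered
  rcases lt_or_ge (r₀ + 2 * (n : ℤ)) r₃ with hlt | hge
  · have := h.le_add_of_mem (R.mem_of_lt₃ hlt).1
    omega
  · have := h.le_add_of_mem (R.mem_of_lt₀ (by omega)).2
    omega

theorem eq_of_short_edge (R : IsShortStar E r₀ r₁ r₂ r₃ r₄)
    (R' : IsShortStar E r₀ r₁' r₂ r₃' r₄') (h : Admissible n E) :
    r₁ = r₁' ∧ r₃ = r₃' ∧ r₄ = r₄' := by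
  rcases R with R | R | R <;> rcases R' with R' | R' | R'
  · obtain ⟨-, h₁, h₃, h₄⟩ := R.eq_of_middle R' h
    exact ⟨h₁, h₃, h₄⟩
  · exact (R.notMem_angle₂_left h R'.ordered.1 R'.mem₀₃).elim
  · exact (R.notMem_angle₂_left h R'.ordered.2.1 R'.mem₁₄).elim
  · exact (R'.notMem_angle₂_left h R.ordered.1 R.mem₀₃).elim
  · obtain rfl := R.eq₄_of_eq₁₃ R' h
    obtain rfl := R.eq₂_of_eq₁₄ R' h
    exact ⟨rfl, rfl, R.eq₀_of_eq₂ R' h⟩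
  · exact (R'.notMem_angle₂_right h R.ordered.2.2.2 R.mem₁₄).elim
  · exact (R'.notMem_angle₂_left h R.ordered.2.1 R.mem₁₄).elim
  · exact (R.notMem_angle₂_right h R'.ordered.2.2.2 R'.mem₁₄).elim
  · obtain ⟨h₃, h₄, h₁, -⟩ := R.eq_of_middle R' h
    exact ⟨h₁, h₃, h₄⟩

end IsShortStar

end ShortStars

section FlipCandidates

variable {n : ℕ} {E : Set Edge} {u s₁ s₂ v s₄ x y : ℤ}

/-- The right end `y` of `(x, y)` is a vertex of one of the two stars containing the edge `(u, v)`,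
namely `IsStar E u s₁ s₂ v s₄` or the star in which `(u, v)` is short. Moreover `(x, y)` enters the
star through the angle at `y`, and crosses `(u, v)` and another edge of the star. -/
def EndsAtStar (E : Set Edge) (u s₂ v x y : ℤ) : Prop :=
  (y = s₂ ∧ x < u) ∨ ∃ r₁ r₃ r₄, IsShortStar E u r₁ v r₃ r₄ ∧
    ((v < r₃ ∧ y = r₃ ∧ u < x ∧ x < r₁) ∨ (v < r₄ ∧ y = r₄ ∧ r₁ < x ∧ x < v))

/-- The analogue of `EndsAtStar` for the left end `x` of `(x, y)`. -/
def StartsAtStar (E : Set Edge) (u s₁ s₂ v s₄ x y : ℤ) : Prop :=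
  (x = s₂ ∧ s₄ < y) ∨ (x = s₁ ∧ v < y ∧ y < s₄) ∨ ∃ r₁ r₃ r₄, IsShortStar E u r₁ v r₃ r₄ ∧
    ((r₄ < u ∧ x = r₄ ∧ r₁ < y ∧ y < v) ∨ (r₃ < u ∧ x = r₃ ∧ u < y ∧ y < r₁))

theorem Saturated.exists_endsAtStar (h : Saturated n E) (S : IsStar E u s₁ s₂ v s₄)
    (h' : Admissible n (exchange n E (u, v) (x, y))) (hxy : (x, y) ∉ E) (hlt : x + 2 < y) :
    ∃ t : ℤ, EndsAtStar E u s₂ v (x + t * n) (y + t * n) := by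
  have hmem := mem_exchange_self (n := n) (E := E) (e := (u, v)) (f := (x, y))
  have hexch {p q : ℤ} (hpq : (p, q) ∈ E) := mem_exchange_of_mem (n := n) (u := u) (v := v)
    (f := (x, y)) hpq
  have hE := h.toAdmissible
  obtain ⟨v₀, v₁, v₂, v₃, v₄, Q, ⟨rfl, hx⟩ | ⟨rfl, hx⟩ | ⟨rfl, hx⟩⟩ :=
    h.exists_isStar_bisected_right hxy hlt (h'.le_add_of_mem hmem) <;> have := Q.ordered
  · obtain ⟨t, rfl, rfl⟩ | h₀₃ := hexch Q.mem₀₃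
    · have := S.eq₂_of_eq₀₃ (Q.add_mul hE t) hE
      exact ⟨t, .inl (by omega)⟩
    obtain ⟨t, rfl, rfl⟩ | h₁₄ := hexch Q.mem₁₄
    · exact (S.long_edges_ne (Q.add_mul hE t) hE rfl).elim
    exact (h'.no_crossing hmem h₀₃ h₁₄ (by omega)).elim
  · obtain ⟨t, rfl, rfl⟩ | h₀₂ := hexch Q.mem₀₂
    · exact ⟨t, .inr ⟨_, _, _, .inl (Q.add_mul hE t), by omega⟩⟩
    obtain ⟨t, rfl, rfl⟩ | h₁₄ := hexch Q.mem₁₄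
    · exact (S.long_edges_ne (Q.add_mul hE t) hE rfl).elim
    exact (h'.no_crossing h₀₂ hmem h₁₄ (by omega)).elim
  · obtain ⟨t, rfl, rfl⟩ | h₀₂ := hexch Q.mem₀₂
    · exact ⟨t, .inr ⟨_, _, _, .inl (Q.add_mul hE t), by omega⟩⟩
    obtain ⟨t, rfl, rfl⟩ | h₁₃ := hexch Q.mem₁₃
    · exact ⟨t, .inr ⟨_, _, _, .inr (.inl (Q.add_mul hE t)), by omega⟩⟩
    exact (h'.no_crossing h₀₂ h₁₃ hmem (by omega)).elim

theorem Saturated.exists_startsAtStar (h : Saturated n E) (S : IsStar E u s₁ s₂ v s₄)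
    (h' : Admissible n (exchange n E (u, v) (x, y))) (hxy : (x, y) ∉ E) (hlt : x + 2 < y) :
    ∃ t : ℤ, StartsAtStar E u s₁ s₂ v s₄ (x + t * n) (y + t * n) := by
  have hmem := mem_exchange_self (n := n) (E := E) (e := (u, v)) (f := (x, y))
  have hexch {p q : ℤ} (hpq : (p, q) ∈ E) := mem_exchange_of_mem (n := n) (u := u) (v := v)
    (f := (x, y)) hpq
  have hE := h.toAdmissible
  obtain ⟨v₀, v₁, v₂, v₃, v₄, Q, ⟨rfl, hy⟩ | ⟨rfl, hy⟩ | ⟨rfl, hy⟩⟩ :=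
    h.exists_isStar_bisected_left hxy hlt (h'.le_add_of_mem hmem) <;> have := Q.ordered
  · obtain ⟨t, rfl, rfl⟩ | h₀₃ := hexch Q.mem₀₃
    · have Q' := Q.add_mul hE t
      obtain h₂ := S.eq₂_of_eq₀₃ Q' hE
      obtain ⟨-, -, -, h₄⟩ := S.eq_of_middle (h₂ ▸ Q') hE
      exact ⟨t, .inl (by omega)⟩
    obtain ⟨t, rfl, rfl⟩ | h₁₄ := hexch Q.mem₁₄
    · exact (S.long_edges_ne (Q.add_mul hE t) hE rfl).elim
    exact (h'.no_crossing h₀₃ h₁₄ hmem (by omega)).elim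
  · obtain ⟨t, rfl, rfl⟩ | h₀₃ := hexch Q.mem₀₃
    · have Q' := Q.add_mul hE t
      obtain h₁ := S.eq₁_of_eq₀₃ Q' hE
      obtain h₄ := S.eq₄_of_eq₁₃ (h₁ ▸ Q') hE
      exact ⟨t, .inr (.inl (by omega))⟩
    obtain ⟨t, rfl, rfl⟩ | h₂₄ := hexch Q.mem₂₄
    · exact ⟨t, .inr (.inr ⟨_, _, _, .inr (.inr (Q.add_mul hE t)), by omega⟩)⟩
    exact (h'.no_crossing h₀₃ hmem h₂₄ (by omega)).elim
  · obtain ⟨t, rfl, rfl⟩ | h₁₃ := hexch Q.mem₁₃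
    · exact ⟨t, .inr (.inr ⟨_, _, _, .inr (.inl (Q.add_mul hE t)), by omega⟩)⟩
    obtain ⟨t, rfl, rfl⟩ | h₂₄ := hexch Q.mem₂₄
    · exact ⟨t, .inr (.inr ⟨_, _, _, .inr (.inr (Q.add_mul hE t)), by omega⟩)⟩
    exact (h'.no_crossing hmem h₁₃ h₂₄ (by omega)).elim

end FlipCandidates

section UniquenessOfFlip

variable {n : ℕ} {E : Set Edge} {u s₁ s₂ v s₄ r₁ r₃ r₄ x y j : ℤ}

/-- The flip of `(u, v)`, where `S : IsStar E u s₁ s₂ v s₄`: if `(u, v)` is not a loop, it is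
an edge of another star with vertices `u, r₁, v, r₃, r₄`, and the flip joins either `s₁` and `r₃` or
`s₂` and `r₄`, whichever pair is the common bisector of the two stars. -/
def IsFlip (n : ℕ) (E : Set Edge) (u s₁ s₂ v s₄ x y : ℤ) : Prop :=
  (v = u + 2 * n ∧ x = s₂ ∧ y = s₂ + 2 * n) ∨ ∃ r₁ r₃ r₄, IsShortStar E u r₁ v r₃ r₄ ∧
    ((v < r₃ ∧ s₁ < r₁ ∧ r₃ < s₄ ∧ x = s₁ ∧ y = r₃) ∨
      (v < r₄ ∧ r₁ < s₂ ∧ s₄ < r₄ ∧ x = s₂ ∧ y = r₄) ∨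
      (r₄ < u ∧ r₁ < s₂ ∧ x = r₄ ∧ y = s₂))

theorem IsFlip.unique (h : Admissible n E) (he : (u, v) ∈ E) (S : IsStar E u s₁ s₂ v s₄)
    {x' y' : ℤ} (hf : IsFlip n E u s₁ s₂ v s₄ x y) (hf' : IsFlip n E u s₁ s₂ v s₄ x' y') :
    x = x' ∧ y = y' := by
  have hS := S.ordered
  rcases hf with hf | ⟨r₁, r₃, r₄, R, hf⟩
  · rcases hf' with hf' | ⟨r₁', r₃', r₄', R', -⟩
    · omega
    · exact (R'.ne_loop h hf.1).elim
  rcases hf' with hf' | ⟨r₁', r₃', r₄', R', hf'⟩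
  · exact (R.ne_loop h hf'.1).elim
  obtain ⟨rfl, rfl, rfl⟩ := R.eq_of_short_edge R' h
  have hR := R.ordered
  have h₃₄ : ¬(s₁ < r₁ ∧ v < r₄ ∧ s₄ < r₄) := fun hlt =>
    h.no_crossing he S.mem₁₄ (R.isStar_of_lt₄ hlt.2.1).mem₁₄ (by omega)
  have h₃₄' : ¬(s₁ < r₁ ∧ r₄ < u) := fun hlt =>
    h.no_crossing (R.mem_of_lt₀ hlt.2).1 he S.mem₁₄ (by omega)
  omega

theorem eq_neg_one_or_zero_or_one (hlo : -(2 * (n : ℤ)) < j * n) (hhi : j * n < 2 * n) :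
    j = -1 ∨ j = 0 ∨ j = 1 := by
  have : -2 < j := lt_of_mul_lt_mul_right (by linarith) (Int.natCast_nonneg n)
  have : j < 2 := lt_of_mul_lt_mul_right hhi (Int.natCast_nonneg n)
  omega

theorem eq_one_or_two (hlo : 0 < j * n) (hhi : j * n ≤ 2 * n) : j = 1 ∨ j = 2 := by
  have hpos : 0 < j := pos_of_mul_pos_left hlo (Int.natCast_nonneg n)
  have : 0 < (n : ℤ) := pos_of_mul_pos_right hlo hpos.le
  have : j ≤ 2 := le_of_mul_le_mul_right hhi this
  omega

theorem Admissible.le_add_of_crossing (h : Admissible n E) (he : (u, v) ∈ E) (hf : (x, y) ∈ E)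
    (hl : u < x) (hr : v < y) : v ≤ x + n := by
  have := h.two_le
  by_contra! hlt
  exact h.no_crossing (h.sub_mem he) he hf (by omega)

/-- The edge `(s₂, s₂ + n)` would be a short edge of a star of the new triangulation, but the angles
of `S` at `s₂` together with `n`-periodicity leave no room for such a star. -/
theorem IsStar.half_turn_notMem_exchange (S : IsStar E u s₁ s₂ v s₄) (h : Admissible n E)
    (h' : Saturated n (exchange n E (u, v) (x, y))) (hlen : y = x + n) (h₄ : s₄ < s₂ + n)
    (h₀ : s₂ - n < u) : (s₂, s₂ + n) ∉ exchange n E (u, v) (x, y) := by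
  intro hmem
  have := h.two_le
  have := S.ordered
  have hright {z : ℤ} (hz : s₂ + n < z) : (s₂, z) ∉ exchange n E (u, v) (x, y) := by
    rintro (hz' | hz')
    · exact S.notMem_angle₂_right h (by omega) hz'.1
    · have := sub_eq_sub_of_mem_orbitOf hz'
      omega
  obtain ⟨v₀, v₁, v₂, v₃, v₄, Q, ⟨rfl, rfl⟩ | ⟨rfl, rfl⟩ | ⟨rfl, rfl⟩⟩ :=
    h'.exists_isStar_short_edge hmem (by omega) (by omega) <;> have := Q.ordered
  · exact hright (by omega) Q.mem₀₃
  · exact hright (by omega) Q.mem₁₄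
  · rcases lt_trichotomy v₀ (s₂ - n) with hlt | heq | hgt
    · rcases Q.mem₀₂ with h₀₂ | h₀₂
      · exact S.notMem_angle₂_left h (by omega) h₀₂.1
      · have := sub_eq_sub_of_mem_orbitOf h₀₂
        omega
    · have := h'.add_mem Q.mem₀₃
      rw [heq, sub_add_cancel] at this
      exact hright (by omega) this
    · exact h'.no_crossing (h'.sub_mem hmem) Q.mem₀₃ Q.mem₁₄ (by omega)

theorem Saturated.exists_isFlip_of_eq_s₂_of_eq_s₂ (h : Saturated n E) (he : (u, v) ∈ E)
    (S : IsStar E u s₁ s₂ v s₄) (hxy : (x, y) ∉ E)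
    (h' : Saturated n (exchange n E (u, v) (x, y))) (hy : y = s₂) (hx : x + j * n = s₂)
    (hxu : x < u) (hyj : s₄ < y + j * n) :
    ∃ k : ℤ, IsFlip n E u s₁ s₂ v s₄ (x + k * n) (y + k * n) := by
  have := h.two_le
  have hS := S.ordered
  have hself := mem_exchange_self (n := n) (E := E) (e := (u, v)) (f := (x, y))
  have := h'.le_add_of_mem hself
  have := h.le_add_of_mem he
  rcases eq_one_or_two (j := j) (n := n) (by omega) (by omega) with rfl | rfl
  · have hhalf := h'.add_mem hself
    rw [show (x + n, y + n) = (s₂, s₂ + (n : ℤ)) by ext <;> simp only <;> omega] at hhalf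
    exact (S.half_turn_notMem_exchange h.toAdmissible h' (by omega) (by omega) (by omega)
      hhalf).elim
  · by_cases hloop : v = u + 2 * n
    · exact ⟨2, .inl ⟨hloop, by omega, by omega⟩⟩
    obtain ⟨c, hc⟩ := h.exists_loop
    have hc' : (c, c + 2 * n) ∈ exchange n E (u, v) (x, y) :=
      mem_exchange_of_sub_ne hc (by omega)
    obtain rfl : y = x + 2 * n := by omega
    obtain ⟨t, rfl⟩ := exists_eq_add_mul_of_loop_mem h'.toAdmissible hself hc'
    refine (hxy ?_).elim
    simpa [add_right_comm] using h.add_mul_mem hc t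

theorem Saturated.exists_isFlip_of_eq_s₂_of_eq_s₁ (h : Saturated n E) (he : (u, v) ∈ E)
    (S : IsStar E u s₁ s₂ v s₄) (h' : Saturated n (exchange n E (u, v) (x, y)))
    (hy : y = s₂) (hx : x + j * n = s₁) (hxu : x < u) (hyj : v < y + j * n)
    (hyj' : y + j * n < s₄) : ∃ k : ℤ, IsFlip n E u s₁ s₂ v s₄ (x + k * n) (y + k * n) := by
  have hE := h.toAdmissible
  have hS := S.ordered
  have hself := mem_exchange_self (n := n) (E := E) (e := (u, v)) (f := (x, y))
  have := h'.le_add_of_mem hself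
  have := h.le_add_of_mem he
  have := h.le_add_of_mem S.mem₁₄
  obtain rfl : j = 1 := by
    rcases eq_neg_one_or_zero_or_one (j := j) (n := n) (by omega) (by omega)
      with rfl | rfl | rfl <;> omega
  by_cases hlt : u + n < s₂
  · exact (h.no_crossing S.mem₁₃ (h.add_mem S.mem₀₂) S.mem₂₄ (by omega)).elim
  obtain ⟨m, hm₂, hm₄⟩ | h₂₄ := mem_exchange_of_mem (n := n) (u := u) (v := v) (f := (x, y)) S.mem₂₄
  · have R := S.add_mul hE m
    rw [← hm₂, ← hm₄] at R
    obtain rfl : m = -1 := by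
      rcases eq_neg_one_or_zero_or_one (j := m) (n := n) (by omega) (by omega)
        with rfl | rfl | rfl <;> omega
    exact ⟨0, .inr ⟨_, _, _, .inr (.inr R), .inr (.inr (by omega))⟩⟩
  · exact (h'.no_crossing (h'.add_mem hself) h₂₄ (h'.add_mem (h'.add_mem hself)) (by omega)).elim

theorem Saturated.exists_isFlip_of_eq_s₂_of_eq_r₄ (h : Saturated n E) (he : (u, v) ∈ E)
    (S : IsStar E u s₁ s₂ v s₄) (h' : Saturated n (exchange n E (u, v) (x, y)))
    (R : IsShortStar E u r₁ v r₃ r₄) (hr₄ : r₄ < u) (hy : y = s₂) (hx : x + j * n = r₄)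
    (hxu : x < u) (hyj : r₁ < y + j * n) (hyj' : y + j * n < v) :
    ∃ k : ℤ, IsFlip n E u s₁ s₂ v s₄ (x + k * n) (y + k * n) := by
  have := h.two_le
  have hS := S.ordered
  have hR := R.ordered
  have := h'.le_add_of_mem mem_exchange_self
  have := h.le_add_of_mem he
  have h₄₁ := (R.mem_of_lt₀ hr₄).1
  have := h.le_add_of_mem (R.mem_of_lt₀ hr₄).2
  rcases eq_neg_one_or_zero_or_one (j := j) (n := n) (by omega) (by omega) with rfl | rfl | rfl
  · exact (h.no_crossing h₄₁ (h.sub_mem he) he (by omega)).elim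
  · exact ⟨0, .inr ⟨_, _, _, R, by omega⟩⟩
  · have := h.le_add_of_crossing he S.mem₂₄ (by omega) (by omega)
    omega

theorem Saturated.false_of_eq_s₂_of_eq_r₃ (h : Saturated n E) (he : (u, v) ∈ E)
    (S : IsStar E u s₁ s₂ v s₄) (h' : Saturated n (exchange n E (u, v) (x, y)))
    (R : IsShortStar E u r₁ v r₃ r₄) (hr₃ : r₃ < u) (hy : y = s₂) (hx : x + j * n = r₃)
    (hxu : x < u) (hyj : u < y + j * n) (hyj' : y + j * n < r₁) : False := by
  have := h.two_le
  have hS := S.ordered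
  have hR := R.ordered
  have Q := R.isStar_of_lt₀ hr₃
  have := h'.le_add_of_mem mem_exchange_self
  have := h.le_add_of_mem he
  have := h.le_add_of_mem Q.mem₁₄
  rcases eq_neg_one_or_zero_or_one (j := j) (n := n) (by omega) (by omega) with rfl | rfl | rfl
  · by_cases hlt : r₁ < v - n
    · exact h.no_crossing Q.mem₀₃ (h.sub_mem he) he (by omega)
    · exact h.no_crossing Q.mem₀₂ (h.sub_mem he) Q.mem₁₄ (by omega)
  · exact h.no_crossing Q.mem₀₃ he S.mem₂₄ (by omega)
  · have := h.le_add_of_crossing he S.mem₂₄ (by omega) (by omega)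
    omega

theorem Saturated.false_of_eq_r₃_of_eq_s₂ (h : Saturated n E) (he : (u, v) ∈ E)
    (S : IsStar E u s₁ s₂ v s₄) (h' : Saturated n (exchange n E (u, v) (x, y)))
    (R : IsShortStar E u r₁ v r₃ r₄) (hr₃ : v < r₃) (hy : y = r₃) (hx : x + j * n = s₂)
    (hxu : u < x) (hxr : x < r₁) (hyj : s₄ < y + j * n) : False := by
  have := h.two_le
  have hS := S.ordered
  have hR := R.ordered
  have hself := mem_exchange_self (n := n) (E := E) (e := (u, v)) (f := (x, y))
  have := h'.le_add_of_mem hself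
  have := h.le_add_of_mem he
  have := h.le_add_of_mem (R.mem_of_lt₃ hr₃).1
  have h₁₃ := (R.mem_of_lt₃ hr₃).2
  rcases eq_neg_one_or_zero_or_one (j := j) (n := n) (by omega) (by omega) with rfl | rfl | rfl
  · exact h.no_crossing he (h.add_mem he) h₁₃ (by omega)
  · exact h.no_crossing he S.mem₂₄ h₁₃ (by omega)
  · have h₀₂ : (u + n, s₂ + n) ∈ exchange n E (u, v) (x, y) :=
      mem_exchange_of_sub_ne (h.add_mem S.mem₀₂) (by omega)
    exact h'.no_crossing hself h₀₂ (h'.add_mem hself) (by omega)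

theorem Saturated.exists_isFlip_of_eq_r₃_of_eq_s₁ (h : Saturated n E) (he : (u, v) ∈ E)
    (S : IsStar E u s₁ s₂ v s₄) (h' : Saturated n (exchange n E (u, v) (x, y)))
    (R : IsShortStar E u r₁ v r₃ r₄) (hr₃ : v < r₃) (hy : y = r₃) (hx : x + j * n = s₁)
    (hxu : u < x) (hxr : x < r₁) (hyj : v < y + j * n) (hyj' : y + j * n < s₄) :
    ∃ k : ℤ, IsFlip n E u s₁ s₂ v s₄ (x + k * n) (y + k * n) := by
  have := h.two_le
  have hS := S.ordered
  have hR := R.ordered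
  have := h'.le_add_of_mem mem_exchange_self
  have := h.le_add_of_mem he
  have := h.le_add_of_mem (R.mem_of_lt₃ hr₃).1
  have h₁₃ := (R.mem_of_lt₃ hr₃).2
  rcases eq_neg_one_or_zero_or_one (j := j) (n := n) (by omega) (by omega) with rfl | rfl | rfl
  · exact (h.no_crossing he (h.add_mem he) h₁₃ (by omega)).elim
  · exact ⟨0, .inr ⟨_, _, _, R, by omega⟩⟩
  · exact (h.no_crossing he (h.add_mem he) S.mem₁₄ (by omega)).elim

theorem Saturated.exists_isFlip_of_eq_r₄_of_eq_s₂ (h : Saturated n E) (he : (u, v) ∈ E)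
    (S : IsStar E u s₁ s₂ v s₄) (R : IsShortStar E u r₁ v r₃ r₄) (hr₄ : v < r₄) (hy : y = r₄)
    (hx : x + j * n = s₂) (hxr : r₁ < x) (hxv : x < v) (hyj : s₄ < y + j * n) :
    ∃ k : ℤ, IsFlip n E u s₁ s₂ v s₄ (x + k * n) (y + k * n) := by
  have := h.two_le
  have hS := S.ordered
  have hR := R.ordered
  have := h.le_add_of_mem he
  rcases eq_neg_one_or_zero_or_one (j := j) (n := n) (by omega) (by omega) with rfl | rfl | rfl
  · have := h.le_add_of_crossing he S.mem₂₄ (by omega) (by omega)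
    omega
  · exact ⟨0, .inr ⟨_, _, _, R, by omega⟩⟩
  · have := h.le_add_of_crossing he (R.isStar_of_lt₄ hr₄).mem₁₄ (by omega) (by omega)
    omega

theorem Saturated.false_of_eq_r₄_of_eq_s₁ (h : Saturated n E) (he : (u, v) ∈ E)
    (S : IsStar E u s₁ s₂ v s₄) (R : IsShortStar E u r₁ v r₃ r₄) (hr₄ : v < r₄) (hy : y = r₄)
    (hx : x + j * n = s₁) (hxr : r₁ < x) (hxv : x < v) (hyj : y + j * n < s₄) : False := by
  have := h.two_le
  have hS := S.ordered
  have hR := R.ordered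
  have h₁₄ := (R.isStar_of_lt₄ hr₄).mem₁₄
  have := h.le_add_of_mem he
  rcases eq_neg_one_or_zero_or_one (j := j) (n := n) (by omega) (by omega) with rfl | rfl | rfl
  · have := h.le_add_of_crossing he S.mem₁₄ (by omega) (by omega)
    omega
  · exact h.no_crossing he h₁₄ S.mem₁₄ (by omega)
  · have := h.le_add_of_crossing he h₁₄ (by omega) (by omega)
    omega

theorem Saturated.false_of_eq_r₃_of_eq_r₄ (h : Saturated n E) (he : (u, v) ∈ E)
    (h' : Saturated n (exchange n E (u, v) (x, y)))
    (R : IsShortStar E u r₁ v r₃ r₄) (hr₃ : v < r₃) (hr₄ : r₄ < u) (hy : y = r₃)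
    (hx : x + j * n = r₄) (hxu : u < x) (hxr : x < r₁) (hyj : r₁ < y + j * n)
    (hyj' : y + j * n < v) : False := by
  have := h.two_le
  have hR := R.ordered
  have Q := R.isStar_of_lt_of_lt hr₃ hr₄
  have := h'.le_add_of_mem mem_exchange_self
  have := h.le_add_of_mem he
  have := h.le_add_of_mem Q.mem₁₄
  rcases eq_neg_one_or_zero_or_one (j := j) (n := n) (by omega) (by omega) with rfl | rfl | rfl
  · exact h.no_crossing Q.mem₁₄ (h.add_mem Q.mem₀₃) (h.add_mem Q.mem₁₄) (by omega)
  · omega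
  · omega

theorem Saturated.exists_isFlip_of_endsAtStar (h : Saturated n E) (he : (u, v) ∈ E)
    (S : IsStar E u s₁ s₂ v s₄) (hxy : (x, y) ∉ E)
    (h' : Saturated n (exchange n E (u, v) (x, y))) (hend : EndsAtStar E u s₂ v x y)
    (hstart : StartsAtStar E u s₁ s₂ v s₄ (x + j * n) (y + j * n)) :
    ∃ k : ℤ, IsFlip n E u s₁ s₂ v s₄ (x + k * n) (y + k * n) := by
  have := S.ordered
  rcases hend with ⟨hy, hxu⟩ | ⟨r₁, r₃, r₄, R, ⟨hr₃, hy, hxu, hxr⟩ | ⟨hr₄, hy, hxr, hxv⟩⟩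
  · rcases hstart with ⟨hx, hyj⟩ | ⟨hx, hyj, hyj'⟩ |
      ⟨r₁, r₃, r₄, R, ⟨hr₄, hx, hyj, hyj'⟩ | ⟨hr₃, hx, hyj, hyj'⟩⟩
    · exact h.exists_isFlip_of_eq_s₂_of_eq_s₂ he S hxy h' hy hx hxu hyj
    · exact h.exists_isFlip_of_eq_s₂_of_eq_s₁ he S h' hy hx hxu hyj hyj'
    · exact h.exists_isFlip_of_eq_s₂_of_eq_r₄ he S h' R hr₄ hy hx hxu hyj hyj'
    · exact (h.false_of_eq_s₂_of_eq_r₃ he S h' R hr₃ hy hx hxu hyj hyj').elim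
  · rcases hstart with ⟨hx, hyj⟩ | ⟨hx, hyj, hyj'⟩ | ⟨r₁', r₃', r₄', R', hstart⟩
    · exact (h.false_of_eq_r₃_of_eq_s₂ he S h' R hr₃ hy hx hxu hxr hyj).elim
    · exact h.exists_isFlip_of_eq_r₃_of_eq_s₁ he S h' R hr₃ hy hx hxu hxr hyj hyj'
    · obtain ⟨rfl, rfl, rfl⟩ := R.eq_of_short_edge R' h.toAdmissible
      obtain ⟨hr₄, hx, hyj, hyj'⟩ | ⟨hr₃', -⟩ := hstart
      · exact (h.false_of_eq_r₃_of_eq_r₄ he h' R hr₃ hr₄ hy hx hxu hxr hyj hyj').elim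
      · omega
  · rcases hstart with ⟨hx, hyj⟩ | ⟨hx, -, hyj'⟩ | ⟨r₁', r₃', r₄', R', hstart⟩
    · exact h.exists_isFlip_of_eq_r₄_of_eq_s₂ he S R hr₄ hy hx hxr hxv hyj
    · exact (h.false_of_eq_r₄_of_eq_s₁ he S R hr₄ hy hx hxr hxv hyj').elim
    · obtain ⟨rfl, rfl, rfl⟩ := R.eq_of_short_edge R' h.toAdmissible
      have := R.ordered
      omega

theorem Saturated.exists_isFlip (h : Saturated n E) (he : (u, v) ∈ E)
    (S : IsStar E u s₁ s₂ v s₄) (hxy : (x, y) ∉ E) (hlt : x + 2 < y)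
    (h' : Saturated n (exchange n E (u, v) (x, y))) :
    ∃ k : ℤ, IsFlip n E u s₁ s₂ v s₄ (x + k * n) (y + k * n) := by
  obtain ⟨t, hend⟩ := h.exists_endsAtStar S h'.toAdmissible hxy hlt
  obtain ⟨s, hstart⟩ := h.exists_startsAtStar S h'.toAdmissible hxy hlt
  have hxy' : (x + t * n, y + t * n) ∉ E := fun hmem => hxy (by
    simpa using h.sub_mul_mem hmem t)
  rw [← exchange_congr (orbitOf_add_mul t)] at h'
  obtain ⟨k, hk⟩ := h.exists_isFlip_of_endsAtStar (j := s - t) he S hxy' h' hend (by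
    convert hstart using 1 <;> ring)
  exact ⟨t + k, by convert hk using 1 <;> ring⟩

theorem Saturated.orbitOf_eq_of_exchange (h : Saturated n E) (he : (u, v) ∈ E)
    (hlt : u + 2 < v) {x' y' : ℤ} (hxy : (x, y) ∉ E) (hlen : x + 2 < y)
    (hxy' : (x', y') ∉ E) (hlen' : x' + 2 < y')
    (h₁ : Saturated n (exchange n E (u, v) (x, y)))
    (h₂ : Saturated n (exchange n E (u, v) (x', y'))) :
    orbitOf n (x, y) = orbitOf n (x', y') := by
  have of_isStar {E : Set Edge} {u s₁ s₂ v s₄ x y x' y' : ℤ} (h : Saturated n E)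
      (he : (u, v) ∈ E) (S : IsStar E u s₁ s₂ v s₄) (hxy : (x, y) ∉ E) (hlen : x + 2 < y)
      (hxy' : (x', y') ∉ E) (hlen' : x' + 2 < y')
      (h₁ : Saturated n (exchange n E (u, v) (x, y)))
      (h₂ : Saturated n (exchange n E (u, v) (x', y'))) :
      orbitOf n (x, y) = orbitOf n (x', y') := by
    obtain ⟨k, hk⟩ := h.exists_isFlip he S hxy hlen h₁
    obtain ⟨l, hl⟩ := h.exists_isFlip he S hxy' hlen' h₂
    obtain ⟨hx, hy⟩ := hk.unique h.toAdmissible he S hl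
    rw [← orbitOf_add_mul k, hx, hy, orbitOf_add_mul l]
  obtain ⟨v₀, v₁, v₂, v₃, v₄, S, ⟨rfl, rfl⟩ | ⟨rfl, rfl⟩⟩ := h.exists_isStar_long_edge he hlt
  · exact of_isStar h he S hxy hlen hxy' hlen' h₁ h₂
  · have hr₁ := h₁.reflect
    have hr₂ := h₂.reflect
    rw [reflect_exchange] at hr₁ hr₂
    have key := of_isStar h.reflect (neg_mem_reflect.2 he) S.reflect
      (mt neg_mem_reflect.1 hxy) (by omega) (mt neg_mem_reflect.1 hxy') (by omega) hr₁ hr₂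
    rw [orbitOf_eq_iff, mem_orbitOf_neg] at key
    simpa only [neg_neg] using orbitOf_eq_iff.2 key

end UniquenessOfFlip

section ExistenceOfFlip

variable {n : ℕ} {E : Set Edge} {u s₁ s₂ v s₄ r₁ r₃ r₄ x y p q : ℤ}

theorem Admissible.not_blockedByPair (h : Admissible n E) (hxy : (x, y) ∈ E) :
    ¬ BlockedByPair E x y := by
  rintro ⟨p, q, r, s, hpq, hrs, hpr, hrq, hqs, hlt | hlt | hlt⟩
  · exact h.no_crossing hxy hpq hrs (by omega)
  · exact h.no_crossing hpq hxy hrs (by omega)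
  · exact h.no_crossing hpq hrs hxy (by omega)

theorem Admissible.sdiff_orbitOf (h : Admissible n E) (e : Edge) :
    Admissible n (E \ orbitOf n e) :=
  h.mono Set.sdiff_subset
    (fun hxy => ⟨h.add_mem hxy.1, fun ho => hxy.2 (by simpa using sub_mem_orbitOf ho)⟩)
    (fun hxy => ⟨h.sub_mem hxy.1, fun ho => hxy.2 (by simpa using add_mem_orbitOf ho)⟩)

theorem add_notMem_sdiff_orbitOf (t : ℤ) :
    (u + t * n, v + t * n) ∉ E \ orbitOf n (u, v) :=
  fun hmem => hmem.2 (mem_orbitOf.2 ⟨t, rfl, rfl⟩)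

/-- The orbit of the edge `(u, v)` of `E` can be exchanged for the orbit of an edge not in `E`
without creating a 3-crossing. -/
def HasFlip (n : ℕ) (E : Set Edge) (u v : ℤ) : Prop :=
  ∃ x y, (x, y) ∉ E ∧ Admissible n (exchange n E (u, v) (x, y))

theorem HasFlip.of_reflect (hflip : HasFlip n (reflect E) (-v) (-u)) : HasFlip n E u v := by
  obtain ⟨x, y, hxy, h⟩ := hflip
  refine ⟨-y, -x, hxy, ?_⟩
  have := h.reflect
  rwa [reflect_exchange, reflect_reflect, neg_neg, neg_neg] at this

theorem hasFlip_of_not_blocked (h : Admissible n E) (hmem : (x, y) ∉ E) (hxy : x < y)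
    (hle : y ≤ x + 2 * n) (hblk : ¬ Blocked n (E \ orbitOf n (u, v)) x y) : HasFlip n E u v :=
  ⟨x, y, hmem, (h.sdiff_orbitOf _).union_orbitOf hxy hle hblk⟩

theorem IsShortStar.reflect (R : IsShortStar E u r₁ v r₃ r₄) :
    IsShortStar (reflect E) (-v) (-r₁) (-u) (-r₄) (-r₃) := by
  rcases R with R | R | R
  · exact .inr (.inr R.reflect)
  · exact .inr (.inl R.reflect)
  · exact .inl R.reflect

theorem IsShortStar.notMem_of_lt₃ (R : IsShortStar E u r₁ v r₃ r₄) (h : Admissible n E)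
    {z : ℤ} (hz : v < z) (hz' : z < r₃) : (u, z) ∉ E := by
  rcases R with R | R | R
  · exact R.notMem_angle₀ h hz hz'
  · exact R.notMem_angle₁ h hz hz'
  · have := R.ordered
    omega

/-- The vertices `v₀, …, v₄` form, in this cyclic order, a star in which `(v₀, v₃)` is a *long*
edge, i.e. has the two vertices `v₁` and `v₂` on its inner side. -/
def IsLongStar (E : Set Edge) (v₀ v₁ v₂ v₃ v₄ : ℤ) : Prop :=
  IsStar E v₀ v₁ v₂ v₃ v₄ ∨ IsStar E v₄ v₀ v₁ v₂ v₃

namespace IsLongStar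

theorem ordered (S : IsLongStar E u s₁ s₂ v s₄) :
    u < s₁ ∧ s₁ < s₂ ∧ s₂ < v ∧ (v < s₄ ∨ s₄ < u) := by
  rcases S with S | S <;> have := S.ordered <;> omega

theorem mem₁₃ (S : IsLongStar E u s₁ s₂ v s₄) : (s₁, v) ∈ E :=
  S.elim (·.mem₁₃) (·.mem₂₄)

theorem notMem_angle₀ (S : IsLongStar E u s₁ s₂ v s₄) (h : Admissible n E) {z : ℤ}
    (hz : s₂ < z) (hz' : z < v) : (u, z) ∉ E :=
  S.elim (·.notMem_angle₀ h hz hz') (·.notMem_angle₁ h hz hz')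

theorem notMem_of_lt₃ (S : IsLongStar E u s₁ s₂ v s₄) (h : Admissible n E) {z : ℤ}
    (hz : v < z) (hz' : u < s₄ → z < s₄) : (s₁, z) ∉ E := by
  rcases S with S | S <;> have := S.ordered
  · exact S.notMem_angle₁ h hz (by omega)
  · exact S.notMem_angle₂_right h hz

theorem le_of_mem_of_lt (S : IsLongStar E u s₁ s₂ v s₄) (h : Admissible n E)
    (hpq : (p, q) ∈ E) (hp : u < p) (hp' : p < s₁) (hq : u < s₄ → q < s₄) :
    q ≤ s₂ := by
  by_contra!
  rcases S with S | S <;> have := S.ordered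
  · exact h.no_crossing S.mem₀₂ hpq S.mem₁₄ (by omega)
  · exact h.no_crossing S.mem₀₂ S.mem₁₃ hpq (by omega)

/-- The three alternatives say that `(p, q)` crosses only `(s₁, v)`, only `(u, r₃)`, or both. Hence
a 3-crossing with `(s₁, r₃)` yields one with `(s₁, v)` or with `(u, r₃)`. -/
theorem cases_of_crossing (S : IsLongStar E u s₁ s₂ v s₄) (R : IsShortStar E u r₁ v r₃ r₄)
    (h : Admissible n E) (hr₃ : v < r₃) (hs₄ : u < s₄ → r₃ < s₄)
    (hpq : (p, q) ∈ E \ orbitOf n (u, v))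
    (hcross : (p < s₁ ∧ s₁ < q ∧ q < r₃) ∨ (s₁ < p ∧ p < r₃ ∧ r₃ < q)) :
    (u ≤ p ∧ p < s₁ ∧ s₁ < q ∧ q ≤ s₂) ∨
      ((v ≤ p ∧ p < r₃ ∧ r₃ < q) ∨ (p < u ∧ v ≤ q ∧ q < r₃)) ∨
      ((s₁ < p ∧ p < v ∧ r₃ < q) ∨ (p < u ∧ s₁ < q ∧ q < v)) := by
  rcases hcross with hcross | hcross
  · rcases lt_trichotomy p u with hlt | rfl | hgt
    · omega
    · by_contra!
      rcases lt_trichotomy q v with hlt | rfl | hgt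
      · exact S.notMem_angle₀ h (by omega) hlt hpq.1
      · exact hpq.2 (mem_orbitOf_self _)
      · exact R.notMem_of_lt₃ h hgt (by omega) hpq.1
    · have := S.le_of_mem_of_lt h hpq.1 hgt (by omega) (by omega)
      omega
  · omega

theorem not_blockedByPair (S : IsLongStar E u s₁ s₂ v s₄) (R : IsShortStar E u r₁ v r₃ r₄)
    (h : Admissible n E) (hr₃ : v < r₃) (hs₄ : u < s₄ → r₃ < s₄) :
    ¬ BlockedByPair (E \ orbitOf n (u, v)) s₁ r₃ := by
  rintro ⟨p, q, r, s, hpq, hrs, hcross⟩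
  have := S.ordered
  have hcases := S.cases_of_crossing R h hr₃ hs₄ hpq (by omega)
  have hcases' := S.cases_of_crossing R h hr₃ hs₄ hrs (by omega)
  by_cases hinner : (u ≤ p ∧ p < s₁ ∧ q ≤ s₂) ∨ (u ≤ r ∧ r < s₁ ∧ s ≤ s₂)
  · exact h.not_blockedByPair S.mem₁₃ ⟨p, q, r, s, hpq.1, hrs.1, by omega⟩
  · exact h.not_blockedByPair (R.mem_of_lt₃ hr₃).1 ⟨p, q, r, s, hpq.1, hrs.1, by omega⟩

theorem not_blockedByTranslate (S : IsLongStar E u s₁ s₂ v s₄)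
    (R : IsShortStar E u r₁ v r₃ r₄) (h : Admissible n E) (hr₃ : v < r₃)
    (hs₄ : u < s₄ → r₃ < s₄) : ¬ BlockedByTranslate n (E \ orbitOf n (u, v)) s₁ r₃ := by
  rintro ⟨p, q, hpq, hp, hp', hlt, hq, hq', hle⟩
  have hpqE := hpq.1
  have := S.ordered
  have h₀₃ := (R.mem_of_lt₃ hr₃).1
  rcases lt_or_ge p (u + n) with hpu | hpu
  · exact h.no_crossing h₀₃ hpqE (h.add_mem h₀₃) (by omega)
  rcases lt_or_ge q (v + n) with hqv | hqv
  · exact h.no_crossing h₀₃ hpqE (h.add_mem S.mem₁₃) (by omega)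
  rcases S with S | S <;> have := S.ordered
  · rcases le_or_gt q s₄ with hqs | hqs
    · exact h.no_crossing h₀₃ hpqE (h.add_mem S.mem₁₄) (by omega)
    · exact h.no_crossing h₀₃ S.mem₁₄ hpqE (by omega)
  · rcases eq_or_lt_of_le hpu with rfl | hup
    · rcases eq_or_lt_of_le hqv with rfl | hvq
      · exact add_notMem_sdiff_orbitOf 1 (by simpa using hpq)
      · exact R.notMem_of_lt₃ h (show v < q - n by omega) (by omega)
          (by simpa using h.sub_mem hpqE)
    · exact h.no_crossing S.mem₀₂ S.mem₁₃ (h.sub_mem hpqE) (by omega)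

theorem hasFlip (S : IsLongStar E u s₁ s₂ v s₄) (R : IsShortStar E u r₁ v r₃ r₄)
    (h : Admissible n E) (hr₃ : v < r₃) (hs₄ : u < s₄ → r₃ < s₄) : HasFlip n E u v := by
  have := S.ordered
  have := h.le_add_of_mem (R.mem_of_lt₃ hr₃).1
  exact hasFlip_of_not_blocked h (S.notMem_of_lt₃ h hr₃ hs₄) (by omega) (by omega)
    (not_or.2 ⟨S.not_blockedByPair R h hr₃ hs₄, S.not_blockedByTranslate R h hr₃ hs₄⟩)

end IsLongStar

namespace IsStar

/-- The analogue of `IsLongStar.cases_of_crossing` for `(s₂, r₄)` with the edges `(u, s₂)` and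
`(v, r₄)`. -/
theorem cases_of_crossing (S : IsStar E u s₁ s₂ v s₄) (R : IsStar E u r₁ v r₃ r₄)
    (h : Admissible n E) (hs₄ : s₄ < r₄) (hpq : (p, q) ∈ E \ orbitOf n (u, v))
    (hcross : (p < s₂ ∧ s₂ < q ∧ q < r₄) ∨ (s₂ < p ∧ p < r₄ ∧ r₄ < q)) :
    (s₁ ≤ p ∧ p < s₂ ∧ s₂ < q ∧ q ≤ v) ∨
      ((v < p ∧ p < r₄ ∧ r₄ < q) ∨ (p ≤ u ∧ v < q ∧ q < r₄)) ∨
      (u < p ∧ p < s₂ ∧ v < q ∧ q < r₄) := by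
  have := S.ordered
  by_contra! hcon
  rcases hcross with hcross | hcross
  · rcases lt_trichotomy q v with hlt | rfl | hgt
    · exact h.no_crossing hpq.1 S.mem₁₃ S.mem₂₄ (by omega)
    · rcases lt_trichotomy p u with hlt | rfl | hgt
      · exact R.notMem_angle₂_left h hlt hpq.1
      · exact hpq.2 (mem_orbitOf_self _)
      · exact S.notMem_angle₃ h hgt (by omega) hpq.1
    · omega
  · rcases lt_trichotomy p v with hlt | rfl | hgt
    · exact h.no_crossing S.mem₁₃ S.mem₂₄ hpq.1 (by omega)
    · exact R.notMem_angle₂_right h (by omega) hpq.1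
    · omega

theorem not_blockedByPair (S : IsStar E u s₁ s₂ v s₄) (R : IsStar E u r₁ v r₃ r₄)
    (h : Admissible n E) (hs₄ : s₄ < r₄) :
    ¬ BlockedByPair (E \ orbitOf n (u, v)) s₂ r₄ := by
  rintro ⟨p, q, r, s, hpq, hrs, hcross⟩
  have := S.ordered
  have hcases := S.cases_of_crossing R h hs₄ hpq (by omega)
  have hcases' := S.cases_of_crossing R h hs₄ hrs (by omega)
  by_cases hinner : (s₁ ≤ p ∧ p < s₂ ∧ q ≤ v) ∨ (s₁ ≤ r ∧ r < s₂ ∧ s ≤ v)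
  · exact h.not_blockedByPair S.mem₀₂ ⟨p, q, r, s, hpq.1, hrs.1, by omega⟩
  · exact h.not_blockedByPair R.mem₂₄ ⟨p, q, r, s, hpq.1, hrs.1, by omega⟩

theorem not_blockedByTranslate (S : IsStar E u s₁ s₂ v s₄) (R : IsStar E u r₁ v r₃ r₄)
    (h : Admissible n E) (hr₁ : r₁ < s₂) :
    ¬ BlockedByTranslate n E s₂ r₄ := by
  rintro ⟨p, q, hpq, hp, hp', hlt, hq, hq', hle⟩
  have := S.ordered
  have := R.ordered
  rcases lt_or_ge p (r₁ + n) with hpr | hpr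
  · exact h.no_crossing R.mem₁₄ hpq (h.add_mem R.mem₁₄) (by omega)
  rcases lt_or_ge q (s₄ + n) with hqs | hqs
  · exact h.no_crossing R.mem₁₄ hpq (h.add_mem S.mem₂₄) (by omega)
  rcases lt_or_ge (r₃ + n) q with hqr | hqr
  · exact h.no_crossing (h.add_mem R.mem₀₃) hpq (h.add_mem R.mem₂₄) (by omega)
  rcases le_or_gt v (u + n) with hvu | hvu
  · exact h.no_crossing R.mem₁₄ (h.add_mem R.mem₀₃) (h.add_mem R.mem₁₄) (by omega)
  · exact h.no_crossing (h.add_mem S.mem₀₂) R.mem₂₄ hpq (by omega)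

theorem hasFlip_of_isStar (S : IsStar E u s₁ s₂ v s₄) (R : IsStar E u r₁ v r₃ r₄)
    (h : Admissible n E) (hr₁ : r₁ < s₂) (hs₄ : s₄ < r₄) : HasFlip n E u v := by
  have := S.ordered
  have := R.ordered
  have := h.le_add_of_mem R.mem₁₄
  refine hasFlip_of_not_blocked h (S.notMem_angle₂_right h hs₄) (by omega) (by omega)
    (not_or.2 ⟨S.not_blockedByPair R h hs₄, ?_⟩)
  rintro ⟨p, q, hpq, hlt⟩
  exact S.not_blockedByTranslate R h hr₁ ⟨p, q, hpq.1, hlt⟩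

theorem lt_of_mem_crossing_loop (S : IsStar E u s₁ s₂ (u + 2 * n) s₄) (h : Admissible n E)
    (he : (u, u + 2 * n) ∈ E) (hpq : (p, q) ∈ E \ orbitOf n (u, u + 2 * n))
    (hq : s₂ < q) (hmid : u + n < s₂) : u < p := by
  have := h.le_add_of_mem hpq.1
  have := S.ordered
  by_contra! hle
  rcases eq_or_lt_of_le hle with rfl | hlt
  · rcases eq_or_lt_of_le (h.le_add_of_mem hpq.1) with rfl | hlt
    · exact hpq.2 (mem_orbitOf_self _)
    · exact S.notMem_angle₀ h hq hlt hpq.1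
  · exact h.no_crossing (h.sub_mem he) hpq.1 he (by omega)

theorem hasFlip_of_loop (S : IsStar E u s₁ s₂ (u + 2 * n) s₄) (h : Admissible n E)
    (he : (u, u + 2 * n) ∈ E) : HasFlip n E u (u + 2 * n) := by
  have hn := h.two_le
  have hS := S.ordered
  have hmid : u + n ≤ s₁ := by
    by_contra!
    have := h.le_add_of_mem S.mem₁₄
    exact h.no_crossing he S.mem₁₄ (h.add_mem he) (by omega)
  have no_nested {p q r s : ℤ} (hpq : (p, q) ∈ E \ orbitOf n (u, u + 2 * n))
      (hrs : (r, s) ∈ E \ orbitOf n (u, u + 2 * n)) :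
      ¬(p < r ∧ r < s₂ ∧ s₂ < q ∧ q < s) := fun hlt => by
    have := S.lt_of_mem_crossing_loop h he hpq (by omega) (by omega)
    exact h.no_crossing S.mem₀₂ hpq.1 hrs.1 (by omega)
  refine hasFlip_of_not_blocked h (S.loop_notMem h) (by omega) le_rfl ?_
  rintro (⟨p, q, r, s, hpq, hrs, hlt⟩ | ⟨p, q, -, hlt⟩)
  · have hsub {p q : ℤ} (hpq : (p, q) ∈ E \ orbitOf n (u, u + 2 * n)) :=
      (h.sdiff_orbitOf (u, u + 2 * n)).sub_mul_mem hpq 2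
    have := h.le_add_of_mem hpq.1
    have := h.le_add_of_mem hrs.1
    obtain ⟨hpr, hrq, hqs, hfirst | hmiddle | hlast⟩ := hlt
    · exact no_nested (hsub hpq) (hsub hrs) (by omega)
    · exact no_nested (hsub hrs) hpq (by omega)
    · exact no_nested hpq hrs (by omega)
  · omega

theorem hasFlip (S : IsStar E u s₁ s₂ v s₄) (h : Saturated n E) (he : (u, v) ∈ E) :
    HasFlip n E u v := by
  have hE := h.toAdmissible
  have hS := S.ordered
  rcases eq_or_lt_of_le (h.le_add_of_mem he) with rfl | hlt
  · exact S.hasFlip_of_loop hE he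
  obtain ⟨r₁, r₃, r₄, R⟩ := h.exists_isShortStar he (by omega) hlt
  have hR := R.ordered
  rcases lt_or_ge r₄ u with hr₄ | hr₄
  · exact .of_reflect (IsLongStar.hasFlip (.inr S.reflect) R.reflect hE.reflect (by omega)
      (by omega))
  have hr₃ : v < r₃ := by omega
  replace R := R.isStar_of_lt₄ (by omega)
  rcases lt_or_ge s₁ r₁ with hlt | hge
  · refine IsLongStar.hasFlip (.inl S) (.inl R) hE hr₃ fun _ => ?_
    by_contra! hle
    rcases eq_or_lt_of_le hle with rfl | hlt
    · exact R.notMem_angle₃ hE hS.1 hlt S.mem₁₄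
    · exact h.no_crossing he S.mem₁₄ R.mem₁₃ (by omega)
  · refine S.hasFlip_of_isStar R hE (by omega) ?_
    by_contra! hle
    rcases eq_or_lt_of_le hge with rfl | hlt
    · exact S.notMem_angle₁ hE hr₃ (by omega) R.mem₁₃
    · exact h.no_crossing he R.mem₁₃ S.mem₁₄ (by omega)

end IsStar

theorem Saturated.hasFlip (h : Saturated n E) (he : (u, v) ∈ E) (hlt : u + 2 < v) :
    HasFlip n E u v := by
  obtain ⟨v₀, v₁, v₂, v₃, v₄, S, ⟨rfl, rfl⟩ | ⟨rfl, rfl⟩⟩ := h.exists_isStar_long_edge he hlt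
  · exact S.hasFlip h he
  · exact .of_reflect (S.reflect.hasFlip h.reflect (neg_mem_reflect.2 he))

end ExistenceOfFlip

section CountingFlips

variable {n : ℕ} {T T' T₁ T₂ : Set Edge} {u v x y : ℤ}

theorem Admissible.sUnion {c : Set (Set Edge)} (hc : ∀ s ∈ c, Admissible n s)
    (hchain : IsChain (· ⊆ ·) c) (hne : c.Nonempty) : Admissible n (⋃₀ c) where
  two_le := (hc _ hne.some_mem).two_le
  lt_of_mem := by
    rintro x y ⟨s, hs, hxy⟩
    exact (hc s hs).lt_of_mem hxy
  add_mem := by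
    rintro x y ⟨s, hs, hxy⟩
    exact ⟨s, hs, (hc s hs).add_mem hxy⟩
  sub_mem := by
    rintro x y ⟨s, hs, hxy⟩
    exact ⟨s, hs, (hc s hs).sub_mem hxy⟩
  no_crossing := by
    rintro x₁ y₁ x₂ y₂ x₃ y₃ ⟨s₁, hs₁, h₁⟩ ⟨s₂, hs₂, h₂⟩ ⟨s₃, hs₃, h₃⟩
    obtain ⟨s, hs, hs₁s, hs₂s⟩ := hchain.directedOn s₁ hs₁ s₂ hs₂
    obtain ⟨r, hr, hsr, hs₃r⟩ := hchain.directedOn s hs s₃ hs₃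
    exact (hc r hr).no_crossing (hsr (hs₁s h₁)) (hsr (hs₂s h₂)) (hs₃r h₃)

theorem Admissible.exists_maximal (h : Admissible n T) :
    ∃ T', T ⊆ T' ∧ Maximal (Admissible n) T' :=
  zorn_subset_nonempty {T | Admissible n T}
    (fun c hc hchain hne => ⟨⋃₀ c, .sUnion hc hchain hne, fun _ => Set.subset_sUnion_of_mem⟩) T h

theorem Saturated.exists_relevantOrbits_eq_insert (h : Saturated n T) (h' : Saturated n T')
    (he : (u, v) ∈ T) (hlt : u + 2 < v) (hsub : T \ orbitOf n (u, v) ⊆ T') :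
    ∃ o ∉ relevantOrbits n T \ {orbitOf n (u, v)},
      insert o (relevantOrbits n T \ {orbitOf n (u, v)}) = relevantOrbits n T' := by
  have hn := h.two_le
  have hcard := h.ncard_relevantOrbits
  have hfin : (relevantOrbits n T).Finite := Set.finite_of_ncard_pos (by omega)
  refine (Set.exists_eq_insert_iff_ncard hfin.sdiff).2 ⟨?_, ?_⟩
  · rintro _ ⟨⟨f, hf, rfl⟩, hne⟩
    exact ⟨f, ⟨hsub ⟨hf.1, fun hfe => hne (orbitOf_eq_iff.2 (mem_orbitOf_comm.1 hfe))⟩, hf.2⟩, rfl⟩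
  · rw [Set.ncard_sdiff_singleton_add_one (h.orbitOf_mem_relevantOrbits he hlt) hfin, hcard,
      h'.ncard_relevantOrbits]

theorem Saturated.exists_eq_exchange (h : Saturated n T) (h' : Saturated n T')
    (he : (u, v) ∈ T) (hlt : u + 2 < v) (hsub : T \ orbitOf n (u, v) ⊆ T') (hne : T' ≠ T) :
    ∃ x y, (x, y) ∉ T ∧ x + 2 < y ∧ T' = exchange n T (u, v) (x, y) := by
  obtain ⟨o, ho, horbits⟩ := h.exists_relevantOrbits_eq_insert h' he hlt hsub
  obtain ⟨⟨x, y⟩, ⟨hxy, hlen, -⟩, rfl⟩ : o ∈ relevantOrbits n T' := horbits ▸ Set.mem_insert _ _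
  have heq : T' = exchange n T (u, v) (x, y) := by
    refine Set.Subset.antisymm ?_ (Set.union_subset hsub (h'.orbitOf_subset hxy))
    rintro ⟨p, q⟩ hpq
    rcases le_or_gt q (p + 2) with hshort | hlong
    · refine .inl ⟨h.mem_of_length_le_two (h'.lt_of_mem hpq) hshort, fun hmem => ?_⟩
      have := sub_eq_sub_of_mem_orbitOf hmem
      omega
    · have horbit := h'.orbitOf_mem_relevantOrbits hpq hlong
      rw [← horbits] at horbit
      rcases horbit with horbit | ⟨horbit, hne⟩
      · exact .inr (orbitOf_eq_iff.1 horbit.symm)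
      · exact .inl ⟨(h.orbitOf_mem_relevantOrbits_iff hlong).1 horbit,
          fun hmem => hne (orbitOf_eq_iff.2 (mem_orbitOf_comm.1 hmem))⟩
  have hlen' : x + 2 < y := by dsimp only at hlen; omega
  refine ⟨x, y, fun hmem => hne ?_, hlen', heq⟩
  have hsame : orbitOf n (x, y) = orbitOf n (u, v) := by
    by_contra hdiff
    exact ho ⟨h.orbitOf_mem_relevantOrbits hmem hlen', hdiff⟩
  rw [heq, exchange_congr hsame, exchange, Set.sdiff_union_of_subset (h.orbitOf_subset he)]

theorem Saturated.eq_of_sdiff_orbitOf_subset (h : Saturated n T) (he : (u, v) ∈ T)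
    (hlt : u + 2 < v) (h₁ : Saturated n T₁) (hsub₁ : T \ orbitOf n (u, v) ⊆ T₁) (hne₁ : T₁ ≠ T)
    (h₂ : Saturated n T₂) (hsub₂ : T \ orbitOf n (u, v) ⊆ T₂) (hne₂ : T₂ ≠ T) : T₁ = T₂ := by
  obtain ⟨x₁, y₁, hmem₁, hlen₁, rfl⟩ := h.exists_eq_exchange h₁ he hlt hsub₁ hne₁
  obtain ⟨x₂, y₂, hmem₂, hlen₂, rfl⟩ := h.exists_eq_exchange h₂ he hlt hsub₂ hne₂
  exact exchange_congr (h.orbitOf_eq_of_exchange he hlt hmem₁ hlen₁ hmem₂ hlen₂ h₁ h₂)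

theorem Saturated.exists_maximal_flip (h : Saturated n T) (he : (u, v) ∈ T) (hlt : u + 2 < v) :
    ∃ T', Maximal (Admissible n) T' ∧ T \ orbitOf n (u, v) ⊆ T' ∧ T' ≠ T := by
  obtain ⟨x, y, hmem, hadm⟩ := h.hasFlip he hlt
  obtain ⟨T', hsub, hmax⟩ := hadm.exists_maximal
  exact ⟨T', hmax, Set.subset_union_left.trans hsub,
    fun heq => hmem (heq ▸ hsub mem_exchange_self)⟩

theorem ncard_maximal_sdiff_orbitOf_subset (hT : Maximal (Admissible n) T) (he : (u, v) ∈ T)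
    (hlt : u + 2 < v) :
    {T' | Maximal (Admissible n) T' ∧ T \ orbitOf n (u, v) ⊆ T'}.ncard = 2 := by
  have h := saturated_of_maximal hT
  obtain ⟨T', hT', hsub, hne⟩ := h.exists_maximal_flip he hlt
  refine Set.ncard_eq_two.2 ⟨T, T', hne.symm, Set.ext fun F => ⟨?_, ?_⟩⟩
  · rintro ⟨hF, hFsub⟩
    exact or_iff_not_imp_left.2 fun hFne => h.eq_of_sdiff_orbitOf_subset he hlt
      (saturated_of_maximal hF) hFsub hFne (saturated_of_maximal hT') hsub hne
  · rintro (rfl | rfl)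
    exacts [⟨hT, Set.sdiff_subset⟩, ⟨hT', hsub⟩]

end CountingFlips

/-- Main theorem: `Δ_{C_n,2}` is pure of dimension `2(n−1)` and
a weak pseudomanifold: for every `n`-periodic 2-triangulation `T` on `ℤ`:
(1) `T` contains exactly `2(n−1)` orbits of 2-relevant edges under translation
by `n`; and (2) for every 2-relevant edge `e ∈ T` with translation orbit `ẽ`,
there are exactly two `n`-periodic 2-triangulations on `ℤ` containing
`T ∖ ẽ` (one of which is `T` itself). -/
theorem main_theorem (n : ℕ) (hn : 1 ≤ n)
    (T : Set Edge) (hT : IsTriangulation n 2 T) :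
    ((orbitOf n) '' {e ∈ T | 2 < e.2 - e.1 ∧ e.2 - e.1 ≤ 2 * (n : ℤ)}).ncard
        = 2 * (n - 1) ∧
    ∀ e ∈ T, 2 < e.2 - e.1 → e.2 - e.1 ≤ 2 * (n : ℤ) →
      {T' : Set Edge | IsTriangulation n 2 T' ∧ T \ orbitOf n e ⊆ T'}.ncard = 2 := by
  obtain rfl | hn₂ : n = 1 ∨ 2 ≤ n := by omega
  · have hnone : {e ∈ T | 2 < e.2 - e.1 ∧ e.2 - e.1 ≤ 2 * ((1 : ℕ) : ℤ)} = ∅ :=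
      Set.sep_eq_empty_iff_mem_false.2 fun e _ => by omega
    exact ⟨by rw [hnone, Set.image_empty, Set.ncard_empty], fun e _ _ _ => by omega⟩
  · rw [isTriangulation_iff_maximal hn₂] at hT
    refine ⟨(saturated_of_maximal hT).ncard_relevantOrbits, fun e he hlt _ => ?_⟩
    simp only [isTriangulation_iff_maximal hn₂]
    exact ncard_maximal_sdiff_orbitOf_subset hT he (by omega)

end Multitriangulation
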